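/- arXiv:0902.0833 — 3 statements merged into one kernel-verified Lean document; each statement's English description precedes it below -/
import Mathlib

section
/- For all α, β ∈ B_3^{+*}: α <_D β holds if and only if C(α) <_left C(β), where C(α) and C(β) denote the <_right-greatest codes of α and β respectively (which exist). -/
/-- The defining relations of the braid group on `n` strands, inside the free group on
generators indexed by `ℕ`.  Generator `i` corresponds to the Artin generator `σ_i`
(for `1 ≤ i ≤ n-1`); generators with index `0` or `≥ n` are killed. -/
def braidRels (n : ℕ) : Set (FreeGroup ℕ) :=
  {r | (∃ i j : ℕ, 1 ≤ i ∧ i + 2 ≤ j ∧ j ≤ n - 1 ∧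
          r = FreeGroup.of i * FreeGroup.of j * (FreeGroup.of i)⁻¹ * (FreeGroup.of j)⁻¹) ∨
       (∃ i : ℕ, 1 ≤ i ∧ i + 1 ≤ n - 1 ∧
          r = FreeGroup.of i * FreeGroup.of (i+1) * FreeGroup.of i *
              (FreeGroup.of (i+1) * FreeGroup.of i * FreeGroup.of (i+1))⁻¹) ∨
       (∃ i : ℕ, (i = 0 ∨ n ≤ i) ∧ r = FreeGroup.of i)}

/-- The braid group `B_n` on `n` strands. -/
abbrev Braid (n : ℕ) := PresentedGroup (braidRels n)

/-- The Artin generator `σ_i` of `B_n`. -/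
def genσ (n i : ℕ) : Braid n := PresentedGroup.of i

/-- The band generator `a_{i,j} = (σ_{j-1} ⋯ σ_{i+1}) σ_i (σ_{i+1}⁻¹ ⋯ σ_{j-1}⁻¹)`. -/
def band (n i j : ℕ) : Braid n :=
  (((List.range' (i+1) (j-1-i)).reverse.map (genσ n)).prod) * genσ n i *
    (((List.range' (i+1) (j-1-i)).reverse.map (genσ n)).prod)⁻¹

/-- The dual braid monoid `B_n^{+*}`: the submonoid of `B_n` generated by the band
generators `a_{i,j}`, `1 ≤ i < j ≤ n`. -/
def dualMonoid (n : ℕ) : Submonoid (Braid n) :=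
  Submonoid.closure {x | ∃ i j : ℕ, 1 ≤ i ∧ i < j ∧ j ≤ n ∧ x = band n i j}

/-- The submonoid `B_I^{+*}` generated by the band generators `a_{i,j}` with `i, j ∈ I`. -/
def dualMonoidOn (n : ℕ) (I : Set ℕ) : Submonoid (Braid n) :=
  Submonoid.closure {x | ∃ i j : ℕ, i ∈ I ∧ j ∈ I ∧ 1 ≤ i ∧ i < j ∧ j ≤ n ∧ x = band n i j}

/-- Evaluation of a word in the letters `σ_i^{±1}` (a letter is a pair of an index and a
sign, `true` meaning positive). -/
def evalWord (n : ℕ) (w : List (ℕ × Bool)) : Braid n :=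
  (w.map (fun p => if p.2 then genσ n p.1 else (genσ n p.1)⁻¹)).prod

/-- `γ` is `σ_i`-positive: it is represented by a word in the letters `σ_1^{±1}, …,
σ_{n-1}^{±1}` containing at least one `σ_i`, no `σ_i⁻¹`, and no `σ_j^{±1}` with `j < i`. -/
def SigmaPositive (n i : ℕ) (γ : Braid n) : Prop :=
  ∃ w : List (ℕ × Bool),
    (∀ p ∈ w, 1 ≤ p.1 ∧ p.1 ≤ n - 1) ∧
    (i, true) ∈ w ∧ (i, false) ∉ w ∧
    (∀ p ∈ w, i ≤ p.1) ∧
    evalWord n w = γ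

/-- The Dehornoy ordering on `B_n`: `α <_D β` iff `α⁻¹β` is `σ_i`-positive for some `i`. -/
def dehornoyLt (n : ℕ) (α β : Braid n) : Prop :=
  ∃ i : ℕ, 1 ≤ i ∧ i ≤ n - 1 ∧ SigmaPositive n i (α⁻¹ * β)

/-- For `t ≥ -1`: `g_t = a_{1,2}` if `t ≡ 0 (mod 3)`, `g_t = a_{1,3}` if `t ≡ 1`,
and `g_t = a_{2,3}` if `t ≡ 2`. -/
def g3 (t : ℤ) : Braid 3 :=
  if t % 3 = 0 then band 3 1 2 else if t % 3 = 1 then band 3 1 3 else band 3 2 3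

/-- The product `g_t^{c_t} g_{t-1}^{c_{t-1}} ⋯ g_0^{c_0} g_{-1}^{c_{-1}}` (for `t ≥ -1`). -/
def tailProd3 (c : ℤ → ℕ) (t : ℤ) : Braid 3 :=
  ((List.range (t + 2).toNat).map (fun k => g3 (t - k) ^ c (t - k))).prod

/-- `c` is a code of `β ∈ B_3^{+*}`: `c` vanishes below `-1`, and for some `m` with
`c_t = 0` for all `t > m` one has `β = g_m^{c_m} ⋯ g_{-1}^{c_{-1}}`. -/
def IsCode3 (β : Braid 3) (c : ℤ → ℕ) : Prop :=
  (∀ t : ℤ, t < -1 → c t = 0) ∧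
  ∃ m : ℕ, (∀ t : ℤ, (m : ℤ) < t → c t = 0) ∧ β = tailProd3 c (m : ℤ)

/-- `c <_left c'`: at the largest index `l` where they differ, `c_l < c'_l`. -/
def codeLtLeft (c c' : ℤ → ℕ) : Prop :=
  ∃ l : ℤ, c l < c' l ∧ ∀ t : ℤ, l < t → c t = c' t

/-- `c <_right c'`: at the smallest index `l` where they differ, `c_l < c'_l`. -/
def codeLtRight (c c' : ℤ → ℕ) : Prop :=
  ∃ l : ℤ, c l < c' l ∧ ∀ t : ℤ, t < l → c t = c' t

/-- `c` is the `<_right`-greatest code of `β`. -/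
def IsGreatestCode3 (β : Braid 3) (c : ℤ → ℕ) : Prop :=
  IsCode3 β c ∧ ∀ c' : ℤ → ℕ, IsCode3 β c' → c' ≠ c → codeLtRight c' c

namespace B3

/-- First Artin generator. -/
def sa : Braid 3 := genσ 3 1
/-- Second Artin generator. -/
def sb : Braid 3 := genσ 3 2
/-- The Garside element of the dual monoid. -/
def dl : Braid 3 := sb * sa

lemma braid_rel : sa * sb * sa = sb * sa * sb := by
  have h : (FreeGroup.of 1 * FreeGroup.of (1+1) * FreeGroup.of 1 *
      (FreeGroup.of (1+1) * FreeGroup.of 1 * FreeGroup.of (1+1))⁻¹ : FreeGroup ℕ)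
      ∈ braidRels 3 := Or.inr (Or.inl ⟨1, by norm_num, by norm_num, rfl⟩)
  have h2 := PresentedGroup.one_of_mem h
  simp only [map_mul, map_inv] at h2
  exact mul_inv_eq_one.mp h2

lemma band12 : band 3 1 2 = sa := by simp [band, sa]
lemma band23 : band 3 2 3 = sb := by simp [band, sb]
lemma band13 : band 3 1 3 = sb * sa * sb⁻¹ := by
  simp [band, sa, sb]

lemma g3_cases (t : ℤ) :
    (t % 3 = 0 ∧ g3 t = sa) ∨ (t % 3 = 1 ∧ g3 t = sb * sa * sb⁻¹) ∨ (t % 3 = 2 ∧ g3 t = sb) := by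
  have h : t % 3 = 0 ∨ t % 3 = 1 ∨ t % 3 = 2 := by omega
  rcases h with h | h | h <;> simp [g3, h, band12, band13, band23]

lemma g3_eq0 (t : ℤ) (h : t % 3 = 0) : g3 t = sa := by simp [g3, h, band12]
lemma g3_eq1 (t : ℤ) (h : t % 3 = 1) : g3 t = sb * sa * sb⁻¹ := by simp [g3, h, band13]
lemma g3_eq2 (t : ℤ) (h : t % 3 = 2) : g3 t = sb := by simp [g3, h, band23]

lemma rel_c : sb * (sb * sa) = sb * sa * (sb * sa * sb⁻¹) := by
  have h := braid_rel
  calc sb * (sb * sa) = sb * (sb * sa * sb) * sb⁻¹ := by group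
    _ = sb * (sa * sb * sa) * sb⁻¹ := by rw [h]
    _ = _ := by group

lemma g3_succ (t : ℤ) : SemiconjBy dl (g3 t) (g3 (t + 1)) := by
  unfold SemiconjBy dl
  have h := braid_rel
  have h' : t % 3 = 0 ∨ t % 3 = 1 ∨ t % 3 = 2 := by omega
  rcases h' with h' | h' | h'
  · rw [g3_eq0 t h', g3_eq1 (t+1) (by omega)]; group
  · rw [g3_eq1 t h', g3_eq2 (t+1) (by omega), rel_c]
  · rw [g3_eq2 t h', g3_eq0 (t+1) (by omega), ← h]; group

lemma g3_two (t : ℤ) : SemiconjBy (g3 (t + 2)) (g3 t) (g3 (t + 1)) := by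
  unfold SemiconjBy
  have h := braid_rel
  have h' : t % 3 = 0 ∨ t % 3 = 1 ∨ t % 3 = 2 := by omega
  rcases h' with h' | h' | h'
  · rw [g3_eq0 t h', g3_eq1 (t+1) (by omega), g3_eq2 (t+2) (by omega)]; group
  · rw [g3_eq1 t h', g3_eq2 (t+1) (by omega), g3_eq0 (t+2) (by omega)]
    calc sa * (sb * sa * sb⁻¹) = (sa * sb * sa) * sb⁻¹ := by group
      _ = _ := by rw [h]; group
  · rw [g3_eq2 t h', g3_eq0 (t+1) (by omega), g3_eq1 (t+2) (by omega)]
    calc sb * sa * sb⁻¹ * sb = sb * sa * sb * sb⁻¹ := by group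
      _ = sa * (sb * sa * sb⁻¹) := by rw [← h]; group

lemma g3_period (t : ℤ) : g3 (t + 3) = g3 t := by
  simp [g3]

lemma g3_pow (n : ℕ) (t : ℤ) : SemiconjBy (dl ^ n) (g3 t) (g3 (t + n)) := by
  induction n with
  | zero => simp
  | succ k ih =>
    rw [pow_succ']
    have := (g3_succ (t + k)).mul_left ih
    push_cast
    rwa [← add_assoc]

/-- Product of the letters of index less than `n`. -/
def W (c : ℤ → ℕ) : ℕ → Braid 3
  | 0 => g3 (-1) ^ c (-1)
  | n + 1 => g3 n ^ c n * W c n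

lemma tail_eq (c : ℤ → ℕ) (n : ℕ) : tailProd3 c ((n : ℤ) - 1) = W c n := by
  induction n with
  | zero => simp [tailProd3, W]
  | succ k ih =>
    rw [W, ← ih]
    unfold tailProd3
    have h1 : (((k + 1 : ℕ) : ℤ) - 1 + 2).toNat = k + 1 + 1 := by omega
    have h2 : ((k : ℤ) - 1 + 2).toNat = k + 1 := by omega
    simp only [bind_pure_comp, List.map_eq_map, List.map_map]
    rw [h1, h2, List.range_succ_eq_map (n := k + 1), List.map_cons, List.prod_cons, List.map_map]
    congr 1
    · simp
    · congr 1
      apply List.map_congr_left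
      intro i _
      simp only [Function.comp]
      have : (((k + 1 : ℕ) : ℤ) - 1 - (i.succ : ℕ)) = (k : ℤ) - 1 - i := by push_cast; ring
      rw [this]

lemma W_stable (c : ℤ → ℕ) (n : ℕ) (h : ∀ t : ℤ, n ≤ t → c t = 0) (k : ℕ) :
    W c (n + k) = W c n := by
  induction k with
  | zero => rfl
  | succ k ih =>
    rw [← add_assoc, W, ih, h _ (by push_cast; omega)]; simp

lemma code_W {β : Braid 3} {c : ℤ → ℕ} (h : IsCode3 β c) :
    ∃ M : ℕ, ∀ n ≥ M, (∀ t : ℤ, n ≤ t → c t = 0) ∧ β = W c n := by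
  obtain ⟨_, m, hm, rfl⟩ := h
  refine ⟨m + 1, fun n hn => ⟨fun t ht => hm t (by omega), ?_⟩⟩
  obtain ⟨k, rfl⟩ := Nat.exists_eq_add_of_le hn
  rw [W_stable c (m + 1) (fun t ht => hm t (by push_cast at ht; omega)), ← tail_eq]
  congr 1; push_cast; ring

lemma W_code {c : ℤ → ℕ} (h0 : ∀ t < -1, c t = 0) (n : ℕ) (h : ∀ t : ℤ, n ≤ t → c t = 0) :
    IsCode3 (W c n) c := by
  refine ⟨h0, n, fun t ht => h t (by omega), ?_⟩
  rw [← W_stable c n h 1, ← tail_eq]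
  congr 1; push_cast; ring

lemma W_congr_below {c c' : ℤ → ℕ} (n : ℕ) (h : ∀ t : ℤ, t < n → c t = c' t) :
    W c n = W c' n := by
  induction n with
  | zero => simp [W, h (-1) (by norm_num)]
  | succ k ih =>
    rw [W, W, ih (fun t ht => h t (by push_cast; omega)), h k (by push_cast; omega)]

lemma W_quot {c c' : ℤ → ℕ} (n : ℕ) (h : ∀ t : ℤ, n ≤ t → c t = c' t) (k : ℕ) :
    (W c (n + k))⁻¹ * W c' (n + k) = (W c n)⁻¹ * W c' n := by
  induction k with
  | zero => rfl
  | succ k ih =>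
    rw [← ih, ← add_assoc, W, W, h _ (by push_cast; omega)]; group

lemma W_bump {c c' : ℤ → ℕ} (n : ℕ) (h : ∀ t : ℤ, t < n - 1 → c' t = c t)
    (h1 : c' (n - 1) = c (n - 1) + 1) : W c' n = g3 (n - 1) * W c n := by
  cases n with
  | zero => simp at h1; simp [W, h1, pow_succ']
  | succ k =>
    have e : (((k + 1 : ℕ) : ℤ) - 1) = k := by push_cast; ring
    rw [e] at h h1
    rw [W, W, h1, W_congr_below k h, pow_succ']; group

/-- Greatest codes have no gaps above index `0`. -/
lemma normal {β : Braid 3} {c : ℤ → ℕ} (h : IsGreatestCode3 β c) (k : ℕ)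
    (hk : c (k + 2) ≠ 0) : c (k + 1) ≠ 0 := by
  intro hz
  obtain ⟨M, hM⟩ := code_W h.1
  let c' : ℤ → ℕ := fun t => if t = k + 2 then c (k + 2) - 1 else if t = k + 1 then c k
    else if t = k then 0 else if t = k - 1 then c (k - 1) + 1 else c t
  have e2 : c' (k + 2) = c (k + 2) - 1 := by simp [c']
  have e1 : c' (k + 1) = c k := by simp [c']
  have e0 : c' k = 0 := by simp [c']
  have em : c' (k - 1) = c (k - 1) + 1 := by
    simp only [c']
    rw [if_neg (by omega), if_neg (by omega), if_neg (by omega)]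
    simp
  have elo : ∀ t : ℤ, t < k - 1 → c' t = c t := by
    intro t ht
    simp only [c']
    rw [if_neg (by omega), if_neg (by omega), if_neg (by omega), if_neg (by omega)]
  have ehi : ∀ t : ℤ, k + 3 ≤ t → c' t = c t := by
    intro t ht
    simp only [c']
    rw [if_neg (by omega), if_neg (by omega), if_neg (by omega), if_neg (by omega)]
  have hW : W c' (k + 3) = W c (k + 3) := by
    obtain ⟨r, hr⟩ := Nat.exists_eq_succ_of_ne_zero hk
    rw [hr] at e2
    simp only [W]
    push_cast
    rw [e2, e1, e0, W_bump k elo em, hz, hr]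
    have h2 := ((g3_two k).pow_right (c k)).eq
    have h3 : g3 ((k : ℤ) - 1) = g3 (k + 2) := by
      rw [← g3_period (k - 1)]; congr 1; ring
    simp only [pow_zero, one_mul, Nat.succ_sub_one, Nat.succ_eq_add_one, Nat.add_sub_cancel]
    rw [h3, pow_succ, mul_assoc (g3 (k + 2) ^ r), ← mul_assoc (g3 (k + 2)) (g3 k ^ c k), h2]
    group
  have hcode : IsCode3 β c' := by
    have hq := W_quot (c := c) (c' := c') (k + 3)
      (fun t ht => (ehi t (by push_cast at ht; omega)).symm) M
    rw [hW, inv_mul_cancel] at hq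
    obtain ⟨hv, hb⟩ := hM (k + 3 + M) (by omega)
    have : β = W c' (k + 3 + M) := by rw [hb]; exact (inv_mul_eq_one.mp hq)
    rw [this]
    apply W_code
    · intro t ht
      rw [elo t (by omega)]; exact h.1.1 t ht
    · intro t ht
      rw [ehi t (by push_cast at ht; omega)]; exact hv t ht
  obtain ⟨l, hl, hl'⟩ := h.2 c' hcode (fun he => by rw [he] at em; omega)
  rcases lt_trichotomy l ((k : ℤ) - 1) with hh | hh | hh
  · rw [elo l hh] at hl; omega
  · subst hh; omega
  · have := hl' _ hh; omega

/-- Weakly `σ_1`-positive braids. -/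
def NN (γ : Braid 3) : Prop :=
  ∃ w : List (ℕ × Bool), (∀ p ∈ w, 1 ≤ p.1 ∧ p.1 ≤ 2) ∧ (1, false) ∉ w ∧ evalWord 3 w = γ

lemma evalWord_append (w v : List (ℕ × Bool)) :
    evalWord 3 (w ++ v) = evalWord 3 w * evalWord 3 v := by simp [evalWord]

lemma NN.mul {x y : Braid 3} (hx : NN x) (hy : NN y) : NN (x * y) := by
  obtain ⟨w, h1, h2, rfl⟩ := hx
  obtain ⟨v, k1, k2, rfl⟩ := hy
  refine ⟨w ++ v, ?_, ?_, evalWord_append w v⟩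
  · intro p hp
    rcases List.mem_append.mp hp with h | h
    exacts [h1 p h, k1 p h]
  · simp [h2, k2]

lemma NN.one : NN 1 := ⟨[], by simp, by simp, rfl⟩
lemma NN.sa : NN sa := ⟨[(1, true)], by simp, by simp, by simp [evalWord, B3.sa]⟩
lemma NN.sb : NN sb := ⟨[(2, true)], by simp, by simp, by simp [evalWord, B3.sb]⟩
lemma NN.sbinv : NN B3.sb⁻¹ := ⟨[(2, false)], by simp, by simp, by simp [evalWord, B3.sb]⟩
lemma NN.pow {x : Braid 3} (h : NN x) (n : ℕ) : NN (x ^ n) := by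
  induction n with
  | zero => simpa using NN.one
  | succ k ih => rw [pow_succ]; exact ih.mul h

lemma pos_of {x y : Braid 3} (hx : NN x) (hy : NN y) : SigmaPositive 3 1 (x * sa * y) := by
  obtain ⟨w, h1, h2, rfl⟩ := hx
  obtain ⟨v, k1, k2, rfl⟩ := hy
  have hl : ∀ p ∈ w ++ [(1, true)] ++ v, 1 ≤ p.1 ∧ p.1 ≤ 2 := by
    intro p hp
    simp only [List.mem_append, List.mem_singleton] at hp
    rcases hp with (h | h) | h
    · exact h1 p h
    · subst h; simp
    · exact k1 p h
  refine ⟨w ++ [(1, true)] ++ v, hl, by simp, by simp [h2, k2], fun p hp => (hl p hp).1, ?_⟩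
  simp [evalWord, sa, mul_assoc]

lemma low_NN (c : ℤ → ℕ) (n : ℕ) : NN ((W c n)⁻¹ * dl ^ n) := by
  induction n with
  | zero =>
    rw [W, g3_eq2 _ (by norm_num), ← inv_pow]
    simpa using NN.sbinv.pow _
  | succ k ih =>
    have h := ((g3_pow (k + 1) (-1)).pow_right (c k)).inv_right.eq
    have e : (-1 : ℤ) + ((k + 1 : ℕ) : ℤ) = k := by push_cast; ring
    rw [e, g3_eq2 (-1) (by norm_num)] at h
    rw [W, mul_inv_rev, mul_assoc, ← h, pow_succ, dl]
    have := (ih.mul (NN.sb.mul NN.sa)).mul (NN.sbinv.pow (c k))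
    rw [inv_pow] at this
    simpa only [mul_assoc, dl] using this

lemma low_pos (c : ℤ → ℕ) (n : ℕ) {y : Braid 3} (hy : NN y) :
    SigmaPositive 3 1 ((W c (n + 1))⁻¹ * dl ^ (n + 1) * y) := by
  have h := ((g3_pow (n + 1) (-1)).pow_right (c n)).inv_right.eq
  have e : (-1 : ℤ) + ((n + 1 : ℕ) : ℤ) = n := by push_cast; ring
  rw [e, g3_eq2 (-1) (by norm_num)] at h
  rw [W, mul_inv_rev, mul_assoc (W c n)⁻¹, ← h, pow_succ]
  have := pos_of ((low_NN c n).mul NN.sb) ((NN.sbinv.pow (c n)).mul hy)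
  rw [inv_pow] at this
  simpa only [mul_assoc, dl] using this

lemma high_NN (c : ℤ → ℕ) (n : ℕ) (r : ℕ) (hr : 1 ≤ n → r ≠ 0)
    (hc : ∀ i : ℕ, 1 ≤ i → i < n → c i ≠ 0) : NN ((dl ^ n)⁻¹ * (g3 n ^ r * W c n)) := by
  induction n generalizing r with
  | zero =>
    simp only [W]
    rw [g3_eq0 _ (by norm_num), g3_eq2 _ (by norm_num)]
    simpa using (NN.sa.pow r).mul (NN.sb.pow _)
  | succ k ih =>
    obtain ⟨s, rfl⟩ := Nat.exists_eq_succ_of_ne_zero (hr (by omega))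
    have h := ((g3_pow (k + 1) 0).pow_right s.succ).eq
    rw [zero_add, g3_eq0 0 (by norm_num)] at h
    have ih' := ih (c k) (fun h => hc k h (by omega)) (fun i h1 h2 => hc i h1 (by omega))
    have := ((NN.sa.pow s).mul NN.sbinv).mul ih'
    rw [W]
    convert this using 1
    have e : g3 ((k + 1 : ℕ) : ℤ) ^ s.succ = dl ^ (k + 1) * sa ^ s.succ * (dl ^ (k + 1))⁻¹ := by
      rw [h]; group
    rw [e, Nat.succ_eq_add_one, pow_succ sa, pow_succ dl, dl]
    group

lemma lt_of_left {α β : Braid 3} {c d : ℤ → ℕ} (hc : IsGreatestCode3 α c)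
    (hd : IsGreatestCode3 β d) (h : codeLtLeft c d) : dehornoyLt 3 α β := by
  obtain ⟨l, hl, hl'⟩ := h
  obtain ⟨M, hM⟩ := code_W hc.1
  obtain ⟨M', hM'⟩ := code_W hd.1
  have hlow : -1 ≤ l := by
    by_contra hh
    have := hd.1.1 l (by omega); omega
  obtain ⟨n, hn⟩ : ∃ n : ℕ, (n : ℤ) = l + 1 := ⟨(l + 1).toNat, by omega⟩
  have hq := W_quot (c := c) (c' := d) n (fun t ht => hl' t (by omega)) (M + M')
  rw [← (hM (n + (M + M')) (by omega)).2, ← (hM' (n + (M + M')) (by omega)).2] at hq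
  unfold dehornoyLt
  rw [hq]
  cases n with
  | zero =>
    have : l = -1 := by push_cast at hn; omega
    subst this
    refine ⟨2, by norm_num, by norm_num, List.replicate (d (-1) - c (-1)) (2, true), ?_, ?_, ?_,
      ?_, ?_⟩
    · intro p hp; rw [List.eq_of_mem_replicate hp]; simp
    · simp; omega
    · simp
    · intro p hp; rw [List.eq_of_mem_replicate hp]
    · simp only [W, evalWord, List.map_replicate, List.prod_replicate]
      rw [g3_eq2 _ (by norm_num), eq_inv_mul_iff_mul_eq]
      simp only [if_true]
      change sb ^ _ * sb ^ _ = _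
      rw [← pow_add]; congr 1; omega
  | succ n =>
    have : l = n := by push_cast at hn; omega
    subst this
    refine ⟨1, le_refl _, by norm_num, ?_⟩
    obtain ⟨r, hr⟩ := Nat.exists_eq_add_of_lt hl
    have e : (W c (n + 1))⁻¹ * W d (n + 1) = (W c n)⁻¹ * (g3 n ^ (r + 1) * W d n) := by
      rw [W, W, hr, add_assoc, pow_add]; group
    rw [e]
    cases n with
    | zero =>
      simp only [W]
      rw [g3_eq0 ((0 : ℕ) : ℤ) (by norm_num), g3_eq2 (-1) (by norm_num), pow_succ, ← inv_pow]
      have := pos_of ((NN.sbinv.pow (c (-1))).mul (NN.sa.pow r)) (NN.sb.pow (d (-1)))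
      simpa only [mul_assoc] using this
    | succ k =>
      have hdn : ∀ j i : ℕ, i + j = k + 1 → 1 ≤ i → d i ≠ 0 := by
        intro j
        induction j with
        | zero => intro i hi _; have : i = k + 1 := by omega
                  subst this; omega
        | succ j ih =>
          intro i hi h1
          obtain ⟨i, rfl⟩ : ∃ i', i = i' + 1 := ⟨i - 1, by omega⟩
          have h2 := ih (i + 2) (by omega) (by omega)
          have := normal hd i (by exact_mod_cast h2)
          exact_mod_cast this
      have h := low_pos c k (high_NN d (k + 1) (r + 1) (by omega)
        (fun i h1 h2 => hdn (k + 1 - i) i (by omega) h1))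
      convert h using 1
      group

/-! ### An order-preserving action on `ℚ` -/

/-- The map by which `σ_2` acts. -/
def fb (t : ℚ) : ℚ :=
  3 * ⌊(t + 1) / 3⌋ +
    min (2 * (t - 3 * ⌊(t + 1) / 3⌋) + 1) ((t - 3 * ⌊(t + 1) / 3⌋) / 2 + 1)

lemma fb_eq (t : ℚ) (k : ℤ) (h1 : 3 * k - 1 ≤ t) (h2 : t < 3 * k + 2) :
    fb t = 3 * k + min (2 * (t - 3 * k) + 1) ((t - 3 * k) / 2 + 1) := by
  have : ⌊(t + 1) / 3⌋ = k := by
    rw [Int.floor_eq_iff]; constructor <;> linarith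
  rw [fb, this]

lemma exists_k (t : ℚ) : ∃ k : ℤ, 3 * (k : ℚ) - 1 ≤ t ∧ t < 3 * k + 2 := by
  refine ⟨⌊(t + 1) / 3⌋, ?_, ?_⟩
  · have := Int.floor_le ((t + 1) / 3); linarith
  · have := Int.lt_floor_add_one ((t + 1) / 3); linarith

lemma fb_period (t : ℚ) : fb (t - 3) = fb t - 3 := by
  obtain ⟨k, h1, h2⟩ := exists_k t
  rw [fb_eq t k h1 h2, fb_eq (t - 3) (k - 1) (by push_cast; linarith) (by push_cast; linarith)]
  push_cast
  rw [show t - 3 - 3 * ((k : ℚ) - 1) = t - 3 * k by ring]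
  ring

lemma fb_fb (t : ℚ) : fb (fb t + 1) = t + 2 := by
  obtain ⟨k, h1, h2⟩ := exists_k t
  rw [fb_eq t k h1 h2]
  rcases le_total t (3 * k) with h | h
  · rw [min_eq_left (by linarith)]
    rcases lt_or_eq_of_le h with h | h
    · rw [fb_eq _ k (by linarith) (by linarith), min_eq_right (by linarith)]; ring
    · rw [fb_eq _ (k + 1) (by push_cast; linarith) (by push_cast; linarith),
        min_eq_left (by push_cast; linarith)]
      push_cast; linarith
  · rw [min_eq_right (by linarith), fb_eq _ (k + 1) (by push_cast; linarith)
      (by push_cast; linarith), min_eq_left (by push_cast; linarith)]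
    push_cast; ring

lemma fb_mono : Monotone fb := by
  intro s t hst
  obtain ⟨k, h1, h2⟩ := exists_k s
  obtain ⟨m, k1, k2⟩ := exists_k t
  rw [fb_eq s k h1 h2, fb_eq t m k1 k2]
  have hkm : k ≤ m := by
    by_contra hh
    have : (m : ℚ) + 1 ≤ k := by exact_mod_cast (by omega : m + 1 ≤ k)
    linarith
  rcases eq_or_lt_of_le hkm with rfl | hlt
  · gcongr
  · have : (k : ℚ) + 1 ≤ m := by exact_mod_cast hlt
    have a1 := min_le_right (2 * (s - 3 * (k : ℚ)) + 1) ((s - 3 * k) / 2 + 1)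
    have a2 : -1 ≤ min (2 * (t - 3 * (m : ℚ)) + 1) ((t - 3 * m) / 2 + 1) :=
      le_min (by linarith) (by linarith)
    linarith

/-- The permutation by which `σ_2` acts. -/
def pb : Equiv.Perm ℚ where
  toFun := fb
  invFun t := fb (t - 2) + 1
  left_inv t := by
    have h := fb_period (fb t + 1)
    rw [fb_fb] at h
    show fb (fb t - 2) + 1 = t
    rw [show fb t - 2 = fb t + 1 - 3 by ring, h]; ring
  right_inv t := by rw [fb_fb]; ring

/-- The permutation by which `σ_1` acts. -/
def pa : Equiv.Perm ℚ where
  toFun t := pb (t - 1) + 1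
  invFun t := pb.symm (t - 1) + 1
  left_inv t := by simp
  right_inv t := by simp

lemma pb_apply (t : ℚ) : pb t = fb t := rfl
lemma pa_apply (t : ℚ) : pa t = fb (t - 1) + 1 := rfl

lemma pb_pa (t : ℚ) : pb (pa t) = t + 1 := by
  rw [pb_apply, pa_apply, fb_fb]; ring

/-- Images of the generators. -/
def pgen (i : ℕ) : Equiv.Perm ℚ := if i = 1 then pa else if i = 2 then pb else 1

lemma pgen_rels : ∀ r ∈ braidRels 3, FreeGroup.lift pgen r = 1 := by
  rintro r (⟨i, j, h1, h2, h3, rfl⟩ | ⟨i, h1, h2, rfl⟩ | ⟨i, h, rfl⟩)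
  · omega
  · have : i = 1 := by omega
    subst this
    simp only [map_mul, map_inv, FreeGroup.lift_apply_of]
    rw [mul_inv_eq_one]
    simp only [pgen]
    ext t
    simp only [if_true, Equiv.Perm.mul_apply]
    norm_num
    rw [pb_pa, pb_pa, pa_apply, pb_apply]; simp
  · simp only [FreeGroup.lift_apply_of, pgen]
    rw [if_neg (by omega), if_neg (by omega)]

/-- The action. -/
def act : Braid 3 →* Equiv.Perm ℚ := PresentedGroup.toGroup pgen_rels

lemma act_gen (i : ℕ) : act (genσ 3 i) = pgen i := PresentedGroup.toGroup.of pgen_rels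

lemma pb_strict : StrictMono pb := fb_mono.strictMono_of_injective pb.injective

lemma pb_base : pb (-1) = -1 := by
  rw [pb_apply, fb_eq _ 0 (by norm_num) (by norm_num)]; norm_num

lemma pa_mono {s t : ℚ} (h : s ≤ t) : pa s ≤ pa t := by
  rw [pa_apply, pa_apply]; gcongr; exact fb_mono (by linarith)

lemma pa_base : -1 < pa (-1) := by
  rw [pa_apply, fb_eq _ (-1) (by norm_num) (by norm_num)]; norm_num

lemma pbinv_strict : StrictMono (pb⁻¹ : Equiv.Perm ℚ) := by
  intro s t h
  rw [← pb_strict.lt_iff_lt]; simpa using h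

lemma pbinv_base : (pb⁻¹ : Equiv.Perm ℚ) (-1) = -1 := by
  rw [Equiv.Perm.inv_eq_iff_eq, pb_base]

lemma act_word (w : List (ℕ × Bool)) (h : ∀ p ∈ w, 1 ≤ p.1 ∧ p.1 ≤ 2) (h1 : (1, false) ∉ w) :
    -1 ≤ act (evalWord 3 w) (-1) ∧ ((1, true) ∈ w → -1 < act (evalWord 3 w) (-1)) := by
  induction w with
  | nil => simp [evalWord]
  | cons p w ih =>
    obtain ⟨i1, i2⟩ := ih (fun q hq => h q (List.mem_cons_of_mem _ hq))
      (fun hq => h1 (List.mem_cons_of_mem _ hq))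
    have hp := h p List.mem_cons_self
    have e : evalWord 3 (p :: w) = (if p.2 then genσ 3 p.1 else (genσ 3 p.1)⁻¹) * evalWord 3 w := by
      simp [evalWord]
    rw [e, map_mul, Equiv.Perm.mul_apply]
    obtain ⟨i, s⟩ := p
    have hi : i = 1 ∨ i = 2 := by simp only at hp; omega
    rcases hi with rfl | rfl
    · cases s with
      | false => exact absurd List.mem_cons_self h1
      | true =>
        simp only [if_true, act_gen]
        have : -1 < pgen 1 (act (evalWord 3 w) (-1)) := by
          simp only [pgen, if_true]
          exact lt_of_lt_of_le pa_base (pa_mono i1)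
        exact ⟨this.le, fun _ => this⟩
    · cases s with
      | false =>
        have e2 : act (genσ 3 2)⁻¹ = pb⁻¹ := by rw [map_inv, act_gen]; simp [pgen]
        simp only [Bool.false_eq_true, if_false, e2]
        refine ⟨?_, fun hm => ?_⟩
        · have := pbinv_strict.monotone i1
          rwa [pbinv_base] at this
        · have := pbinv_strict (i2 (by simpa using hm))
          rwa [pbinv_base] at this
      | true =>
        have e2 : act (genσ 3 2) = pb := by rw [act_gen]; simp [pgen]
        simp only [if_true, e2]
        refine ⟨?_, fun hm => ?_⟩
        · have := pb_strict.monotone i1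
          rwa [pb_base] at this
        · have := pb_strict (i2 (by simpa using hm))
          rwa [pb_base] at this

lemma act_pos {γ : Braid 3} (h : SigmaPositive 3 1 γ) : -1 < act γ (-1) := by
  obtain ⟨w, h1, h2, h3, _, rfl⟩ := h
  exact (act_word w h1 h3).2 h2

lemma pos_two {γ : Braid 3} (h : SigmaPositive 3 2 γ) : ∃ k : ℕ, γ = sb ^ (k + 1) := by
  obtain ⟨w, h1, h2, h3, h4, rfl⟩ := h
  have hw : w = List.replicate w.length (2, true) := by
    rw [List.eq_replicate_iff]
    refine ⟨rfl, fun p hp => ?_⟩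
    have a1 := h1 p hp
    have a2 := h4 p hp
    obtain ⟨i, s⟩ := p
    have : i = 2 := by simp only at a1 a2; omega
    subst this
    cases s with
    | true => rfl
    | false => exact absurd hp h3
  have hl : w.length ≠ 0 := fun h0 => by
    rw [List.length_eq_zero_iff] at h0; subst h0; simp at h2
  obtain ⟨k, hk⟩ := Nat.exists_eq_succ_of_ne_zero hl
  refine ⟨k, ?_⟩
  rw [hw, hk]; simp [evalWord, sb]

lemma act_two (k : ℕ) : act (sb ^ k) (-1) = -1 := by
  have e2 : act sb = pb := by rw [sb, act_gen]; simp [pgen]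
  induction k with
  | zero => simp
  | succ k ih => rw [pow_succ', map_mul, Equiv.Perm.mul_apply, ih, e2, pb_base]

lemma sb_pow_ne (k : ℕ) : sb ^ (k + 1) ≠ 1 := by
  intro h
  have e2 : act sb = pb := by rw [sb, act_gen]; simp [pgen]
  have key : ∀ j : ℕ, 0 ≤ act (sb ^ j) 0 ∧ 1 ≤ act (sb ^ (j + 1)) 0 := by
    have b0 : pb 0 = 1 := by
      rw [pb_apply, fb_eq _ 0 (by norm_num) (by norm_num)]; norm_num
    intro j
    induction j with
    | zero => simp [e2, b0]
    | succ j ih =>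
      refine ⟨by linarith [ih.2], ?_⟩
      rw [pow_succ', map_mul, Equiv.Perm.mul_apply, e2, ← b0]
      exact pb_strict.monotone (by linarith [ih.2])
  have := (key k).2
  rw [h] at this
  simp at this
  linarith

lemma irrefl_aux {γ : Braid 3} {i j : ℕ} (hi : 1 ≤ i ∧ i ≤ 3 - 1) (hj : 1 ≤ j ∧ j ≤ 3 - 1)
    (h : SigmaPositive 3 i γ) (h' : SigmaPositive 3 j γ⁻¹) : False := by
  have hi' : i = 1 ∨ i = 2 := by omega
  have hj' : j = 1 ∨ j = 2 := by omega
  have inv_pb : ∀ (x : Braid 3), act x (-1) = -1 → act x⁻¹ (-1) = -1 := by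
    intro x hx
    rw [map_inv, Equiv.Perm.inv_eq_iff_eq, hx]
  rcases hi' with rfl | rfl <;> rcases hj' with rfl | rfl
  · obtain ⟨w, h1, h2, h3, _, rfl⟩ := h
    obtain ⟨v, k1, k2, k3, _, hv⟩ := h'
    have := (act_word (w ++ v) (by
      intro p hp
      rcases List.mem_append.mp hp with h | h
      exacts [h1 p h, k1 p h]) (by simp [h3, k3])).2 (by simp [h2])
    rw [evalWord_append, hv] at this
    simp at this
  · obtain ⟨k, hk⟩ := pos_two h'
    have := act_pos h
    have h2 := inv_pb _ (act_two (k + 1))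
    rw [← hk, inv_inv] at h2
    linarith
  · obtain ⟨k, hk⟩ := pos_two h
    have := act_pos h'
    have h2 := inv_pb _ (act_two (k + 1))
    rw [← hk] at h2
    linarith
  · obtain ⟨k, hk⟩ := pos_two h
    obtain ⟨m, hm⟩ := pos_two h'
    rw [hk, inv_eq_iff_mul_eq_one, ← pow_add] at hm
    exact sb_pow_ne (k + 1 + m) hm

lemma not_pos_one {i : ℕ} (hi : 1 ≤ i ∧ i ≤ 3 - 1) (h : SigmaPositive 3 i 1) : False :=
  irrefl_aux hi hi h (by simpa using h)

/-- Finitely supported codes are compared by `codeLtLeft`. -/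
lemma trich (c d : ℤ → ℕ) (hc0 : ∀ t < -1, c t = 0) (hd0 : ∀ t < -1, d t = 0) (n : ℕ)
    (hc : ∀ t : ℤ, n ≤ t → c t = 0) (hd : ∀ t : ℤ, n ≤ t → d t = 0) :
    c = d ∨ codeLtLeft c d ∨ codeLtLeft d c := by
  by_cases he : c = d
  · exact Or.inl he
  right
  obtain ⟨s, hs⟩ := Function.ne_iff.mp he
  obtain ⟨l, hl, hmax⟩ := Int.exists_greatest_of_bdd (P := fun t => c t ≠ d t)
    ⟨n, fun z hz => by
      by_contra hh
      exact hz (by rw [hc z (by omega), hd z (by omega)])⟩ ⟨s, hs⟩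
  have hup : ∀ t, l < t → c t = d t := fun t ht => by
    by_contra hh
    have := hmax t hh; omega
  rcases lt_or_gt_of_ne hl with h | h
  · exact Or.inl ⟨l, h, hup⟩
  · exact Or.inr ⟨l, h, fun t ht => (hup t ht).symm⟩

end B3

/-- Theorem: for `α, β ∈ B_3^{+*}`, `α <_D β` holds iff `C(α) <_left C(β)`, where
`C(α)`, `C(β)` are the `<_right`-greatest codes of `α` and `β`. -/
theorem dehornoyLt_iff_codeLtLeft (α β : Braid 3)
    (hα : α ∈ dualMonoid 3) (hβ : β ∈ dualMonoid 3)
    (cα cβ : ℤ → ℕ) (hcα : IsGreatestCode3 α cα) (hcβ : IsGreatestCode3 β cβ) :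
    dehornoyLt 3 α β ↔ codeLtLeft cα cβ := by
  refine ⟨fun h => ?_, fun h => B3.lt_of_left hcα hcβ h⟩
  obtain ⟨i, hi1, hi2, hi⟩ := h
  obtain ⟨M, hM⟩ := B3.code_W hcα.1
  obtain ⟨M', hM'⟩ := B3.code_W hcβ.1
  obtain ⟨hv, hw⟩ := hM (M + M') (by omega)
  obtain ⟨hv', hw'⟩ := hM' (M + M') (by omega)
  rcases B3.trich cα cβ hcα.1.1 hcβ.1.1 (M + M') hv hv' with h | h | h
  · rw [hw, hw', h, inv_mul_cancel] at hi
    exact (B3.not_pos_one ⟨hi1, hi2⟩ hi).elim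
  · exact h
  · obtain ⟨j, hj1, hj2, hj⟩ := B3.lt_of_left hcβ hcα h
    refine (B3.irrefl_aux ⟨hi1, hi2⟩ ⟨hj1, hj2⟩ hi ?_).elim
    simpa using hj
end

section
/- Let β ∈ B_3^{+*} and let c be the <_right-greatest code of β. If c is not identically zero and m := max{t ≥ −1 : c_t ≠ 0} satisfies m ≥ 1, then c_t ≥ 1 for every index t with 1 ≤ t ≤ m. -/
theorem braid_rel_three : genσ 3 1 * genσ 3 2 * genσ 3 1 = genσ 3 2 * genσ 3 1 * genσ 3 2 := by
  have h : (PresentedGroup.mk (braidRels 3)) (FreeGroup.of 1 * FreeGroup.of (1+1) * FreeGroup.of 1 *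
              (FreeGroup.of (1+1) * FreeGroup.of 1 * FreeGroup.of (1+1))⁻¹) = 1 := by
    apply PresentedGroup.one_of_mem
    exact Or.inr (Or.inl ⟨1, le_refl _, by norm_num, rfl⟩)
  rw [map_mul, map_inv, mul_inv_eq_one] at h
  simp only [map_mul] at h
  exact h

theorem band_one_two : band 3 1 2 = genσ 3 1 := by
  simp [band]

theorem band_two_three : band 3 2 3 = genσ 3 2 := by
  simp [band]

theorem band_one_three : band 3 1 3 = genσ 3 2 * genσ 3 1 * (genσ 3 2)⁻¹ := by
  simp [band]

theorem g3_rel (t : ℤ) : g3 (t + 1) * g3 (t - 1) = g3 t * g3 (t - 2) := by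
  have hr := braid_rel_three
  have e1 : genσ 3 1 * (genσ 3 2 * genσ 3 1 * (genσ 3 2)⁻¹) = genσ 3 2 * genσ 3 1 := by
    rw [← mul_assoc, ← mul_assoc, hr]; group
  have e2 : (genσ 3 2 * genσ 3 1 * (genσ 3 2)⁻¹) * genσ 3 2 = genσ 3 2 * genσ 3 1 := by
    group
  have h3 : t % 3 = 0 ∨ t % 3 = 1 ∨ t % 3 = 2 := by omega
  unfold g3
  rw [band_one_two, band_two_three, band_one_three]
  rcases h3 with h | h | h
  · have a1 : (t + 1) % 3 = 1 := by omega
    have a2 : (t - 1) % 3 = 2 := by omega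
    have a3 : (t - 2) % 3 = 1 := by omega
    simp only [h, a1, a2, a3]
    simpa using e1.symm
  · have a1 : (t + 1) % 3 = 2 := by omega
    have a2 : (t - 1) % 3 = 0 := by omega
    have a3 : (t - 2) % 3 = 2 := by omega
    simp only [h, a1, a2, a3]
    simp
  · have a1 : (t + 1) % 3 = 0 := by omega
    have a2 : (t - 1) % 3 = 1 := by omega
    have a3 : (t - 2) % 3 = 0 := by omega
    simp only [h, a1, a2, a3]
    simpa using e1

theorem g3_period (t : ℤ) : g3 (t + 1) = g3 (t - 2) := by
  unfold g3
  have : (t + 1) % 3 = (t - 2) % 3 := by omega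
  rw [this]

theorem g3_rel_pow (t : ℤ) (k : ℕ) :
    g3 (t + 1) * g3 (t - 1) ^ k = g3 t ^ k * g3 (t - 2) := by
  induction k with
  | zero => simpa using g3_period t
  | succ k ih =>
    rw [pow_succ, ← mul_assoc, ih, mul_assoc, ← g3_period, g3_rel, ← mul_assoc, ← pow_succ, g3_period]

theorem tailProd3_eq (c : ℤ → ℕ) (t : ℤ) :
    tailProd3 c t =
      ((List.range (t + 2).toNat).map (fun k : ℕ => g3 (t - (k : ℤ)) ^ c (t - (k : ℤ)))).prod := by
  have : ∀ l : List ℕ, (do let a ← l; pure (a : ℤ) : List ℤ) = l.map (fun k : ℕ => (k : ℤ)) := by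
    intro l
    simp [List.map_eq_flatMap]
  unfold tailProd3
  rw [this, List.map_map]
  rfl

theorem tailProd3_step (c : ℤ → ℕ) (t : ℤ) (ht : -1 ≤ t) :
    tailProd3 c t = g3 t ^ c t * tailProd3 c (t - 1) := by
  rw [tailProd3_eq, tailProd3_eq]
  have : (t + 2).toNat = (t - 1 + 2).toNat + 1 := by omega
  rw [this, List.range_succ_eq_map]
  simp only [List.map_cons, List.map_map, List.prod_cons]
  congr 1
  · simp
  · congr 2
    funext k
    have : t - ((k + 1 : ℕ) : ℤ) = t - 1 - k := by push_cast; ring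
    simp only [Function.comp, Nat.succ_eq_add_one, this]

theorem tailProd3_congr (c c' : ℤ → ℕ) (t : ℤ) (h : ∀ s ≤ t, c s = c' s) :
    tailProd3 c t = tailProd3 c' t := by
  rw [tailProd3_eq, tailProd3_eq]
  congr 2
  funext k
  rw [h _ (by omega)]

theorem tailProd3_extend (c c' : ℤ → ℕ) (s : ℤ) (hs : -1 ≤ s) (h : ∀ t, s < t → c t = c' t)
    (e : tailProd3 c s = tailProd3 c' s) (n : ℤ) (hn : s ≤ n) :
    tailProd3 c n = tailProd3 c' n := by
  induction n, hn using Int.leInduction with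
  | base => exact e
  | succ n hn ih =>
    rw [tailProd3_step c (n+1) (by omega), tailProd3_step c' (n+1) (by omega), h (n+1) (by omega)]
    simp only [add_sub_cancel_right]
    rw [ih]

/-- Theorem: if `c` is the `<_right`-greatest code of `β ∈ B_3^{+*}` and
`m = max {t ≥ -1 : c_t ≠ 0}` satisfies `m ≥ 1`, then `c_t ≥ 1` for all `1 ≤ t ≤ m`. -/
theorem greatest_code_middle_nonzero (β : Braid 3) (hβ : β ∈ dualMonoid 3)
    (c : ℤ → ℕ) (hc : IsGreatestCode3 β c)
    (m : ℤ) (hm0 : c m ≠ 0) (hmax : ∀ t : ℤ, c t ≠ 0 → t ≤ m) (hm1 : 1 ≤ m) :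
    ∀ t : ℤ, 1 ≤ t → t ≤ m → 1 ≤ c t := by
  intro t₀ ht₀ htm
  by_contra hcon
  have hz : c t₀ = 0 := by omega
  obtain ⟨t, ht, hct, hct1⟩ : ∃ t, t₀ ≤ t ∧ c t = 0 ∧ c (t + 1) ≠ 0 := by
    by_contra hne
    push Not at hne
    have : ∀ s, t₀ ≤ s → c s = 0 := by
      intro s hs
      induction s, hs using Int.leInduction with
      | base => exact hz
      | succ s hs ih => exact hne s hs ih
    exact hm0 (this m htm)
  obtain ⟨⟨hlow, M, hM, hβM⟩, hgr⟩ := hc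
  have hM1 : t + 1 ≤ M := by
    by_contra h
    exact hct1 (hM _ (by omega))
  let c' : ℤ → ℕ := fun s =>
    if s = t + 1 then c (t + 1) - 1 else if s = t then c (t - 1) else
    if s = t - 1 then 0 else if s = t - 2 then c (t - 2) + 1 else c s
  have v1 : c' (t + 1) = c (t + 1) - 1 := by simp [c']
  have v2 : c' t = c (t - 1) := by simp [c']
  have v3 : c' (t - 1) = 0 := by
    have : t - 1 ≠ t + 1 := by omega
    simp [c', this]
  have v4 : c' (t - 2) = c (t - 2) + 1 := by
    have h1 : t - 2 ≠ t + 1 := by omega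
    have h2 : t - 2 ≠ t - 1 := by omega
    simp [c', h1]
  have v5 : ∀ s, t + 1 < s → c s = c' s := by
    intro s hs
    simp only [c']
    rw [if_neg (by omega), if_neg (by omega), if_neg (by omega), if_neg (by omega)]
  have v6 : ∀ s, s < t - 2 → c' s = c s := by
    intro s hs
    simp only [c']
    rw [if_neg (by omega), if_neg (by omega), if_neg (by omega), if_neg (by omega)]
  have ex : ∀ d : ℤ → ℕ, tailProd3 d (t + 1) = g3 (t + 1) ^ d (t + 1) * (g3 t ^ d t *
      (g3 (t - 1) ^ d (t - 1) * (g3 (t - 2) ^ d (t - 2) * tailProd3 d (t - 3)))) := by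
    intro d
    rw [tailProd3_step d (t + 1) (by omega), add_sub_cancel_right,
      tailProd3_step d t (by omega), tailProd3_step d (t - 1) (by omega),
      show t - 1 - 1 = t - 2 by ring, tailProd3_step d (t - 2) (by omega),
      show t - 2 - 1 = t - 3 by ring]
  have e : tailProd3 c (t + 1) = tailProd3 c' (t + 1) := by
    rw [ex c, ex c', v1, v2, v3, v4, hct,
      tailProd3_congr c' c (t - 3) (fun s hs => v6 s (by omega))]
    obtain ⟨k, hk⟩ := Nat.exists_eq_succ_of_ne_zero hct1
    rw [hk, Nat.succ_sub_one, Nat.succ_eq_add_one, pow_succ (g3 (t + 1)) k,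
      pow_succ' (g3 (t - 2)), pow_zero, pow_zero, one_mul, one_mul]
    have hp := g3_rel_pow t (c (t - 1))
    calc _ = g3 (t + 1) ^ k * ((g3 (t + 1) * g3 (t - 1) ^ c (t - 1)) *
          (g3 (t - 2) ^ c (t - 2) * tailProd3 c (t - 3))) := by simp only [mul_assoc]
      _ = _ := by rw [hp]; simp only [mul_assoc]
  have hcode : IsCode3 β c' := by
    refine ⟨fun s hs => ?_, M, fun s hs => ?_, ?_⟩
    · rw [v6 s (by omega)]; exact hlow s hs
    · rw [← v5 s (by omega)]; exact hM s hs
    · rw [hβM]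
      exact tailProd3_extend c c' (t + 1) (by omega) v5 e M hM1
  have hne : c' ≠ c := by
    intro h
    rw [h] at v4
    omega
  obtain ⟨l, hl, hl'⟩ := hgr c' hcode hne
  rcases lt_trichotomy l (t - 2) with h | h | h
  · rw [v6 l h] at hl
    exact lt_irrefl _ hl
  · subst h
    omega
  · have := hl' _ h
    omega
end

section
/- (Property S for the Dehornoy ordering with respect to band generators.) For all α, β ∈ B_n and all indices 1 ≤ i < j ≤ n, one has α β <_D α a_{i,j} β and α a_{i,j}^{−1} β <_D α β. -/
namespace PropS

open FreeGroup hiding map_mul map_one map_inv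

/-- Abbreviation for the free group. -/
abbrev F := FreeGroup ℕ

/-- The generators. -/
abbrev x (i : ℕ) : F := FreeGroup.of i

/-- Index of a letter in the cyclic order at a vertex of the tree. -/
def ix (s : ℕ × Bool) : ℕ := if s.2 then 2 * s.1 + 1 else 2 * s.1 + 2

/-- Index of the first element of a word (`0` for the empty word). -/
def hdl : List (ℕ × Bool) → ℕ
  | [] => 0
  | s :: _ => ix s

/-- Index of the first letter of an element of the free group. -/
def hd (g : F) : ℕ := hdl g.toWord

theorem ix_inj {s t : ℕ × Bool} (h : ix s = ix t) : s = t := by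
  obtain ⟨i, b⟩ := s
  obtain ⟨j, c⟩ := t
  cases b <;> cases c <;> simp [ix] at h ⊢ <;> omega

theorem hd_one : hd 1 = 0 := by simp [hd, hdl]

theorem hd_eq_zero {g : F} : hd g = 0 ↔ g = 1 := by
  constructor
  · intro h
    rw [← toWord_eq_nil_iff]
    unfold hd at h
    cases hg : g.toWord with
    | nil => rfl
    | cons s t =>
      rw [hg] at h
      simp only [hdl, ix] at h
      split_ifs at h
  · rintro rfl; exact hd_one

theorem toWord_cons (s : ℕ × Bool) (g : F) (h : hd g ≠ ix (s.1, !s.2)) :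
    (FreeGroup.mk [s] * g).toWord = s :: g.toWord := by
  have e : FreeGroup.mk [s] * g = FreeGroup.mk (s :: g.toWord) := by
    conv_lhs => rw [← mk_toWord (x := g)]
    rw [FreeGroup.mul_mk]; rfl
  rw [e, toWord_mk, reduce.cons, reduce_toWord]
  unfold hd at h
  cases hg : g.toWord with
  | nil => rfl
  | cons t l =>
    rw [hg] at h
    simp only [hdl] at h
    simp only
    rw [if_neg]
    rintro ⟨h1, h2⟩
    apply h
    congr 1
    ext
    · exact h1.symm
    · simp [h2]

theorem decomp {g : F} {s : ℕ × Bool} (h : hd g = ix s) :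
    ∃ g', g = FreeGroup.mk [s] * g' ∧ hd g' ≠ ix (s.1, !s.2) ∧ FreeGroup.norm g = FreeGroup.norm g' + 1 := by
  unfold hd at h
  cases hg : g.toWord with
  | nil =>
    rw [hg] at h
    simp only [hdl, ix] at h
    split_ifs at h
  | cons t l =>
    rw [hg] at h
    simp only [hdl] at h
    obtain rfl := ix_inj h
    have hr : FreeGroup.IsReduced (t :: l) := by rw [← hg]; exact isReduced_toWord
    have hl : FreeGroup.IsReduced l := by
      unfold FreeGroup.IsReduced at hr ⊢
      exact hr.tail
    have hlw : (FreeGroup.mk l).toWord = l := by rw [toWord_mk, hl.reduce_eq]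
    refine ⟨FreeGroup.mk l, ?_, ?_, ?_⟩
    · rw [FreeGroup.mul_mk, ← mk_toWord (x := g), hg]; rfl
    · unfold hd
      rw [hlw]
      cases l with
      | nil => simp only [hdl, ix]; split_ifs <;> omega
      | cons u m =>
        simp only [hdl]
        intro hc
        have := ix_inj hc
        unfold FreeGroup.IsReduced at hr
        rw [List.isChain_cons_cons] at hr
        have h1 := hr.1
        rw [this] at h1
        simp at h1
    · unfold FreeGroup.norm
      rw [hlw, hg]; rfl

theorem mk_true (i : ℕ) : FreeGroup.mk [(i, true)] = x i := rfl

theorem mk_false (i : ℕ) : FreeGroup.mk [(i, false)] = (x i)⁻¹ := rfl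

theorem hdx (i : ℕ) (g : F) : hd g ≠ 2 * i + 2 → hd (x i * g) = 2 * i + 1 ∧
    FreeGroup.norm (x i * g) = FreeGroup.norm g + 1 := by
  intro h
  have := toWord_cons (i, true) g (by simpa [ix] using h)
  rw [mk_true] at this
  unfold hd FreeGroup.norm
  rw [this]
  simp [hdl, ix]

theorem hdxi (i : ℕ) (g : F) : hd g ≠ 2 * i + 1 → hd ((x i)⁻¹ * g) = 2 * i + 2 ∧
    FreeGroup.norm ((x i)⁻¹ * g) = FreeGroup.norm g + 1 := by
  intro h
  have := toWord_cons (i, false) g (by simpa [ix] using h)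
  rw [mk_false] at this
  unfold hd FreeGroup.norm
  rw [this]
  simp [hdl, ix]

theorem dex {i : ℕ} {g : F} (h : hd g = 2 * i + 1) :
    ∃ g', g = x i * g' ∧ hd g' ≠ 2 * i + 2 ∧ FreeGroup.norm g = FreeGroup.norm g' + 1 := by
  have := decomp (s := (i, true)) (g := g) (by simpa [ix] using h)
  simpa [ix, mk_true] using this

theorem dexi {i : ℕ} {g : F} (h : hd g = 2 * i + 2) :
    ∃ g', g = (x i)⁻¹ * g' ∧ hd g' ≠ 2 * i + 1 ∧ FreeGroup.norm g = FreeGroup.norm g' + 1 := by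
  have := decomp (s := (i, false)) (g := g) (by simpa [ix] using h)
  simpa [ix, mk_false] using this

/-- `hd (x i * g)` when there is cancellation. -/
theorem hdx_c {i : ℕ} {g : F} (h : hd g = 2 * i + 2) :
    hd (x i * g) ≠ 2 * i + 1 ∧ FreeGroup.norm g = FreeGroup.norm (x i * g) + 1 := by
  obtain ⟨g', rfl, h1, h2⟩ := dexi h
  rw [mul_inv_cancel_left]
  exact ⟨h1, h2⟩

theorem hdxi_c {i : ℕ} {g : F} (h : hd g = 2 * i + 1) :
    hd ((x i)⁻¹ * g) ≠ 2 * i + 2 ∧ FreeGroup.norm g = FreeGroup.norm ((x i)⁻¹ * g) + 1 := by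
  obtain ⟨g', rfl, h1, h2⟩ := dex h
  rw [inv_mul_cancel_left]
  exact ⟨h1, h2⟩

/-- Every nonzero head index is a letter. -/
theorem hd_cases (g : F) : g = 1 ∨ (∃ i, hd g = 2 * i + 1) ∨ (∃ i, hd g = 2 * i + 2) := by
  by_cases h : hd g = 0
  · left; exact hd_eq_zero.1 h
  · right
    rcases Nat.even_or_odd' (hd g) with ⟨c, hc | hc⟩
    · right; exact ⟨c - 1, by omega⟩
    · left; exact ⟨c, hc⟩

theorem hd_x (i : ℕ) : hd (x i) = 2 * i + 1 := by
  have := (hdx i 1 (by simp [hd_one])).1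
  simpa using this

theorem hd_xi (i : ℕ) : hd (x i)⁻¹ = 2 * i + 2 := by
  have := (hdxi i 1 (by simp [hd_one])).1
  simpa using this

/-- Reduced products. -/
theorem red_mul (u v : F) (h : hd u⁻¹ ≠ hd v ∨ v = 1) :
    FreeGroup.norm (u * v) = FreeGroup.norm u + FreeGroup.norm v ∧ (u ≠ 1 → hd (u * v) = hd u) := by
  rcases h with h | rfl
  swap
  · simp
  have key : FreeGroup.IsReduced (u.toWord ++ v.toWord) := by
    unfold FreeGroup.IsReduced
    rw [List.isChain_append]
    refine ⟨isReduced_toWord, isReduced_toWord, ?_⟩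
    intro a ha b hb h1
    by_contra h2
    apply h
    unfold hd
    rw [toWord_inv]
    have e1 : hdl (invRev u.toWord) = ix (a.1, !a.2) := by
      rw [invRev]
      obtain ⟨l, hl⟩ : ∃ l, u.toWord = l ++ [a] := by
        rw [Option.mem_def] at ha
        exact List.getLast?_eq_some_iff.1 ha
      rw [hl]
      simp [hdl]
    have e2 : hdl v.toWord = ix b := by
      cases hv : v.toWord with
      | nil => rw [hv] at hb; simp at hb
      | cons t l => rw [hv] at hb; simp at hb; simp [hdl, hb]
    rw [e1, e2]
    congr 1
    ext
    · exact h1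
    · simp only
      revert h2
      cases a.2 <;> cases b.2 <;> simp
  have e : (u * v).toWord = u.toWord ++ v.toWord := by
    rw [toWord_mul, key.reduce_eq]
  constructor
  · unfold FreeGroup.norm; rw [e]; simp
  · intro hu
    unfold hd
    rw [e]
    cases hw : u.toWord with
    | nil => exact absurd (toWord_eq_nil_iff.1 hw) hu
    | cons t l => rfl


/-- Forward Artin substitution. -/
def fw (i : ℕ) : F →* F := FreeGroup.lift (fun j =>
  if j = i then x i * x (i+1) * (x i)⁻¹ else if j = i + 1 then x i else x j)

/-- Backward Artin substitution. -/
def bw (i : ℕ) : F →* F := FreeGroup.lift (fun j =>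
  if j = i then x (i+1) else if j = i + 1 then (x (i+1))⁻¹ * x i * x (i+1) else x j)

theorem fw_x (i j : ℕ) : fw i (x j) =
    if j = i then x i * x (i+1) * (x i)⁻¹ else if j = i + 1 then x i else x j := by
  simp [fw]

theorem bw_x (i j : ℕ) : bw i (x j) =
    if j = i then x (i+1) else if j = i + 1 then (x (i+1))⁻¹ * x i * x (i+1) else x j := by
  simp [bw]

/-- The Artin automorphism. -/
def ph (i : ℕ) : MulAut F := MonoidHom.toMulEquiv (fw i) (bw i)
  (by
    ext j
    simp only [MonoidHom.comp_apply, MonoidHom.id_apply, fw_x]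
    split_ifs with h1 h2
    · subst h1; simp [bw_x]; group
    · subst h2; simp [bw_x]
    · simp [bw_x, h1, h2])
  (by
    ext j
    simp only [MonoidHom.comp_apply, MonoidHom.id_apply, bw_x]
    split_ifs with h1 h2
    · subst h1; simp [fw_x]
    · subst h2; simp [fw_x]; group
    · simp [fw_x, h1, h2])

theorem ph_apply (i : ℕ) (g : F) : ph i g = fw i g := rfl

theorem phi_apply (i : ℕ) (g : F) : (ph i)⁻¹ g = bw i g := rfl

theorem ph_A (i : ℕ) : ph i (x i) = x i * x (i+1) * (x i)⁻¹ := by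
  rw [ph_apply, fw_x]; simp

theorem ph_B (i : ℕ) : ph i (x (i+1)) = x i := by
  rw [ph_apply, fw_x]; simp

theorem ph_o (i j : ℕ) (h1 : j ≠ i) (h2 : j ≠ i + 1) : ph i (x j) = x j := by
  rw [ph_apply, fw_x]; simp [h1, h2]

theorem phi_A (i : ℕ) : (ph i)⁻¹ (x i) = x (i+1) := by
  rw [phi_apply, bw_x]; simp

theorem phi_B (i : ℕ) : (ph i)⁻¹ (x (i+1)) = (x (i+1))⁻¹ * x i * x (i+1) := by
  rw [phi_apply, bw_x]; simp

theorem phi_o (i j : ℕ) (h1 : j ≠ i) (h2 : j ≠ i + 1) : (ph i)⁻¹ (x j) = x j := by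
  rw [phi_apply, bw_x]; simp [h1, h2]

/-- Location of `ph i g` in terms of first letters. -/
def JF (i p q r : ℕ) : Prop :=
  (p = 2*i+1 → q = 2*i+1 ∧ r = 2*i+3) ∧
  (p = 2*i+2 → q = 2*i+1 ∧ r = 2*i+4) ∧
  (p = 2*i+3 → q = 2*i+1 ∧ r ≠ 2*i+2 ∧ r ≠ 2*i+3 ∧ r ≠ 2*i+4) ∧
  (p = 2*i+4 → (q = 2*i+2 ∨ q = 2*i+3 ∨ q = 2*i+4) ∧ r = 2*i+2) ∧
  (p < 2*i+1 ∨ 2*i+4 < p → q = p ∧ r = 2*i+2)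

theorem jf (i : ℕ) : ∀ (k : ℕ) (g : F), FreeGroup.norm g = k →
    JF i (hd g) (hd (ph i g)) (hd ((x i)⁻¹ * ph i g)) := by
  intro k
  induction k with
  | zero =>
    intro g hg
    rw [FreeGroup.norm_eq_zero] at hg
    subst hg
    rw [map_one, mul_one, hd_one, hd_xi]
    refine ⟨?_, ?_, ?_, ?_, ?_⟩ <;> intro h <;> omega
  | succ k ih =>
    intro g hg
    rcases hd_cases g with rfl | ⟨j, hj⟩ | ⟨j, hj⟩
    · simp at hg
    · obtain ⟨g', rfl, h1, h2⟩ := dex hj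
      have J := ih g' (by omega)
      rw [hj, map_mul]
      generalize ph i g' = h at *
      have o1 := hdxi i h
      have o2 := hdxi_c (i := i) (g := h)
      by_cases e1 : j = i
      · subst e1
        rw [ph_A]
        have e : x j * x (j+1) * (x j)⁻¹ * h = x j * (x (j+1) * ((x j)⁻¹ * h)) := by group
        rw [e, inv_mul_cancel_left]
        have o3 := hdx (j+1) ((x j)⁻¹ * h)
        have o4 := hdx j (x (j+1) * ((x j)⁻¹ * h))
        unfold JF at *
        omega
      · by_cases e2 : j = i + 1
        · subst e2
          rw [ph_B, inv_mul_cancel_left]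
          have o3 := hdx i h
          unfold JF at *
          omega
        · rw [ph_o i j e1 e2]
          have o3 := hdx j h
          have o4 := hdxi i (x j * h)
          unfold JF at *
          omega
    · obtain ⟨g', rfl, h1, h2⟩ := dexi hj
      have J := ih g' (by omega)
      rw [hj, map_mul, map_inv]
      generalize ph i g' = h at *
      have o1 := hdxi i h
      have o2 := hdxi_c (i := i) (g := h)
      by_cases e1 : j = i
      · subst e1
        rw [ph_A]
        have e : (x j * x (j+1) * (x j)⁻¹)⁻¹ * h = x j * ((x (j+1))⁻¹ * ((x j)⁻¹ * h)) := by group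
        rw [e, inv_mul_cancel_left]
        have o3 := hdxi (j+1) ((x j)⁻¹ * h)
        have o4 := hdx j ((x (j+1))⁻¹ * ((x j)⁻¹ * h))
        unfold JF at *
        omega
      · by_cases e2 : j = i + 1
        · subst e2
          rw [ph_B]
          have o3 := hdxi i ((x i)⁻¹ * h)
          unfold JF at *
          omega
        · rw [ph_o i j e1 e2]
          have o3 := hdxi j h
          have o4 := hdxi i ((x j)⁻¹ * h)
          unfold JF at *
          omega

/-- Location of `(ph i)⁻¹ g` in terms of first letters. -/
def JG (i p q r : ℕ) : Prop :=
  (p = 2*i+4 → q = 2*i+4 ∧ r = 2*i+2) ∧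
  (p = 2*i+3 → q = 2*i+4 ∧ r = 2*i+1) ∧
  (p = 2*i+2 → q = 2*i+4 ∧ r ≠ 2*i+3 ∧ r ≠ 2*i+2 ∧ r ≠ 2*i+1) ∧
  (p = 2*i+1 → (q = 2*i+3 ∨ q = 2*i+2 ∨ q = 2*i+1) ∧ r = 2*i+3) ∧
  (p < 2*i+1 ∨ 2*i+4 < p → q = p ∧ r = 2*i+3)

theorem jg (i : ℕ) : ∀ (k : ℕ) (g : F), FreeGroup.norm g = k →
    JG i (hd g) (hd ((ph i)⁻¹ g)) (hd (x (i+1) * (ph i)⁻¹ g)) := by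
  intro k
  induction k with
  | zero =>
    intro g hg
    rw [FreeGroup.norm_eq_zero] at hg
    subst hg
    rw [map_one, mul_one, hd_one, hd_x]
    refine ⟨?_, ?_, ?_, ?_, ?_⟩ <;> intro h <;> omega
  | succ k ih =>
    intro g hg
    rcases hd_cases g with rfl | ⟨j, hj⟩ | ⟨j, hj⟩
    · simp at hg
    · obtain ⟨g', rfl, h1, h2⟩ := dex hj
      have J := ih g' (by omega)
      rw [hj, map_mul]
      generalize (ph i)⁻¹ g' = h at *
      have o1 := hdx (i+1) h
      have o2 := hdx_c (i := i+1) (g := h)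
      by_cases e1 : j = i
      · subst e1
        rw [phi_A]
        have o3 := hdx (j+1) (x (j+1) * h)
        unfold JG at *
        omega
      · by_cases e2 : j = i + 1
        · subst e2
          rw [phi_B]
          have e : (x (i+1))⁻¹ * x i * x (i+1) * h = (x (i+1))⁻¹ * (x i * (x (i+1) * h)) := by
            group
          rw [e, mul_inv_cancel_left]
          have o3 := hdx i (x (i+1) * h)
          have o4 := hdxi (i+1) (x i * (x (i+1) * h))
          unfold JG at *
          omega
        · rw [phi_o i j e1 e2]
          have o3 := hdx j h
          have o4 := hdx (i+1) (x j * h)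
          unfold JG at *
          omega
    · obtain ⟨g', rfl, h1, h2⟩ := dexi hj
      have J := ih g' (by omega)
      rw [hj, map_mul, map_inv]
      generalize (ph i)⁻¹ g' = h at *
      have o1 := hdx (i+1) h
      have o2 := hdx_c (i := i+1) (g := h)
      by_cases e1 : j = i
      · subst e1
        rw [phi_A, mul_inv_cancel_left]
        have o3 := hdxi (j+1) h
        unfold JG at *
        omega
      · by_cases e2 : j = i + 1
        · subst e2
          rw [phi_B]
          have e : ((x (i+1))⁻¹ * x i * x (i+1))⁻¹ * h
              = (x (i+1))⁻¹ * ((x i)⁻¹ * (x (i+1) * h)) := by group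
          rw [e, mul_inv_cancel_left]
          have o3 := hdxi i (x (i+1) * h)
          have o4 := hdxi (i+1) ((x i)⁻¹ * (x (i+1) * h))
          unfold JG at *
          omega
        · rw [phi_o i j e1 e2]
          have o3 := hdxi j h
          have o4 := hdx (i+1) ((x j)⁻¹ * h)
          unfold JG at *
          omega

/-- Cyclic order on natural numbers. -/
def cyc3 (a b c : ℕ) : Prop := (a < b ∧ b < c) ∨ (b < c ∧ c < a) ∨ (c < a ∧ a < b)

/-- The cyclic order on the free group. -/
def Cyc (u v w : F) : Prop := ∃ p : F, cyc3 (hd (p⁻¹ * u)) (hd (p⁻¹ * v)) (hd (p⁻¹ * w))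

theorem Cyc.left {u v w : F} (q : F) (h : Cyc u v w) : Cyc (q * u) (q * v) (q * w) := by
  obtain ⟨p, hp⟩ := h
  refine ⟨q * p, ?_⟩
  have e : ∀ t : F, (q * p)⁻¹ * (q * t) = p⁻¹ * t := by intro t; group
  rw [e, e, e]; exact hp

theorem cyc_of_hd {u v w : F} (h : cyc3 (hd u) (hd v) (hd w)) : Cyc u v w :=
  ⟨1, by simpa using h⟩

theorem cyc3_rot {a b c : ℕ} (h : cyc3 a b c) : cyc3 c a b := by
  unfold cyc3 at *
  omega

theorem JF.split {i p q r : ℕ} (h : JF i p q r) :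
    (p = 2*i+1 ∧ q = 2*i+1 ∧ r = 2*i+3) ∨ (p = 2*i+2 ∧ q = 2*i+1 ∧ r = 2*i+4) ∨
    (p = 2*i+3 ∧ q = 2*i+1 ∧ r ≠ 2*i+2 ∧ r ≠ 2*i+3 ∧ r ≠ 2*i+4) ∨
    (p = 2*i+4 ∧ (q = 2*i+2 ∨ q = 2*i+3 ∨ q = 2*i+4) ∧ r = 2*i+2) ∨
    ((p < 2*i+1 ∨ 2*i+4 < p) ∧ q = p ∧ r = 2*i+2) := by
  obtain ⟨h1, h2, h3, h4, h5⟩ := h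
  by_cases e1 : p = 2*i+1
  · exact Or.inl ⟨e1, h1 e1⟩
  by_cases e2 : p = 2*i+2
  · exact Or.inr (Or.inl ⟨e2, h2 e2⟩)
  by_cases e3 : p = 2*i+3
  · exact Or.inr (Or.inr (Or.inl ⟨e3, h3 e3⟩))
  by_cases e4 : p = 2*i+4
  · exact Or.inr (Or.inr (Or.inr (Or.inl ⟨e4, h4 e4⟩)))
  have e5 : p < 2*i+1 ∨ 2*i+4 < p := by omega
  exact Or.inr (Or.inr (Or.inr (Or.inr ⟨e5, h5 e5⟩)))

theorem cyc3_lin {i p q r p' q' r' p'' q'' r'' : ℕ} (h : JF i p q r) (h' : JF i p' q' r')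
    (h'' : JF i p'' q'' r'') (c1 : p < p') (c2 : p' < p'') : cyc3 q q' q'' ∨ cyc3 r r' r'' := by
  unfold cyc3
  rcases h.split with h | h | h | h | h <;> rcases h'.split with h' | h' | h' | h' | h' <;>
    first
    | (exfalso; clear h''; omega)
    | (rcases h''.split with h'' | h'' | h'' | h'' | h'' <;> first | (exfalso; omega) | omega)

theorem cyc3_arith {i p q r p' q' r' p'' q'' r'' : ℕ} (h : JF i p q r) (h' : JF i p' q' r')
    (h'' : JF i p'' q'' r'') (c : cyc3 p p' p'') : cyc3 q q' q'' ∨ cyc3 r r' r'' := by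
  rcases c with c | c | c
  · exact cyc3_lin h h' h'' c.1 c.2
  · exact (cyc3_lin h' h'' h c.1 c.2).imp cyc3_rot cyc3_rot
  · exact (cyc3_lin h'' h h' c.1 c.2).imp (fun t => cyc3_rot (cyc3_rot t))
      (fun t => cyc3_rot (cyc3_rot t))

theorem JG.split {i p q r : ℕ} (h : JG i p q r) :
    (p = 2*i+4 ∧ q = 2*i+4 ∧ r = 2*i+2) ∨ (p = 2*i+3 ∧ q = 2*i+4 ∧ r = 2*i+1) ∨
    (p = 2*i+2 ∧ q = 2*i+4 ∧ r ≠ 2*i+3 ∧ r ≠ 2*i+2 ∧ r ≠ 2*i+1) ∨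
    (p = 2*i+1 ∧ (q = 2*i+3 ∨ q = 2*i+2 ∨ q = 2*i+1) ∧ r = 2*i+3) ∨
    ((p < 2*i+1 ∨ 2*i+4 < p) ∧ q = p ∧ r = 2*i+3) := by
  obtain ⟨h1, h2, h3, h4, h5⟩ := h
  by_cases e1 : p = 2*i+4
  · exact Or.inl ⟨e1, h1 e1⟩
  by_cases e2 : p = 2*i+3
  · exact Or.inr (Or.inl ⟨e2, h2 e2⟩)
  by_cases e3 : p = 2*i+2
  · exact Or.inr (Or.inr (Or.inl ⟨e3, h3 e3⟩))
  by_cases e4 : p = 2*i+1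
  · exact Or.inr (Or.inr (Or.inr (Or.inl ⟨e4, h4 e4⟩)))
  have e5 : p < 2*i+1 ∨ 2*i+4 < p := by omega
  exact Or.inr (Or.inr (Or.inr (Or.inr ⟨e5, h5 e5⟩)))

theorem cyc3_lin' {i p q r p' q' r' p'' q'' r'' : ℕ} (h : JG i p q r) (h' : JG i p' q' r')
    (h'' : JG i p'' q'' r'') (c1 : p < p') (c2 : p' < p'') : cyc3 q q' q'' ∨ cyc3 r r' r'' := by
  unfold cyc3
  rcases h.split with h | h | h | h | h <;> rcases h'.split with h' | h' | h' | h' | h' <;>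
    first
    | (exfalso; clear h''; omega)
    | (rcases h''.split with h'' | h'' | h'' | h'' | h'' <;> first | (exfalso; omega) | omega)

theorem cyc3_arith' {i p q r p' q' r' p'' q'' r'' : ℕ} (h : JG i p q r) (h' : JG i p' q' r')
    (h'' : JG i p'' q'' r'') (c : cyc3 p p' p'') : cyc3 q q' q'' ∨ cyc3 r r' r'' := by
  rcases c with c | c | c
  · exact cyc3_lin' h h' h'' c.1 c.2
  · exact (cyc3_lin' h' h'' h c.1 c.2).imp cyc3_rot cyc3_rot
  · exact (cyc3_lin' h'' h h' c.1 c.2).imp (fun t => cyc3_rot (cyc3_rot t))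
      (fun t => cyc3_rot (cyc3_rot t))

theorem cyc_ph (i : ℕ) {u v w : F} (h : Cyc u v w) : Cyc (ph i u) (ph i v) (ph i w) := by
  obtain ⟨p, hp⟩ := h
  have := cyc3_arith (jf i _ (p⁻¹ * u) rfl) (jf i _ (p⁻¹ * v) rfl)
    (jf i _ (p⁻¹ * w) rfl) hp
  simp only [map_mul, map_inv] at this
  rcases this with h | h
  · exact ⟨_, h⟩
  · refine ⟨ph i p * x i, ?_⟩
    simpa only [mul_inv_rev, mul_assoc] using h

theorem cyc_phi (i : ℕ) {u v w : F} (h : Cyc u v w) :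
    Cyc ((ph i)⁻¹ u) ((ph i)⁻¹ v) ((ph i)⁻¹ w) := by
  obtain ⟨p, hp⟩ := h
  have := cyc3_arith' (jg i _ (p⁻¹ * u) rfl) (jg i _ (p⁻¹ * v) rfl)
    (jg i _ (p⁻¹ * w) rfl) hp
  simp only [map_mul, map_inv] at this
  rcases this with h | h
  · exact ⟨_, h⟩
  · refine ⟨(ph i)⁻¹ p * (x (i+1))⁻¹, ?_⟩
    simpa only [mul_inv_rev, inv_inv, mul_assoc] using h


set_option maxHeartbeats 4000000 in
theorem ph_le_aux (i : ℕ) : ∀ (k : ℕ) (y : F), FreeGroup.norm y ≤ k → ∀ e : F,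
    (hd e < 2*i+1 ∨ 2*i+4 < hd e ∨ hd ((x i)⁻¹ * e) = 2*i+3 ∨ hd (x (i+1) * e) = 2*i+2) →
    (hd e ≠ hd y ∨ y = 1) → Cyc e (ph i y) y ∨ ph i y = y := by
  intro k
  induction k with
  | zero =>
    intro y hy e _ _
    right
    have : y = 1 := by rw [← FreeGroup.norm_eq_zero]; omega
    subst this
    exact map_one _
  | succ k ih =>
    intro y hy e he hey
    by_cases y1 : y = 1
    · subst y1; right; exact map_one _
    have hey' : hd e ≠ hd y := by
      rcases hey with h | h
      · exact h
      · exact absurd h y1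
    clear hey
    have J := (jf i _ y rfl).split
    have a1 := hdxi i e
    have a2 := hdx (i+1) e
    have a3 := hdxi i y
    have a4 := hdxi_c (i := i) (g := y)
    have a5 := hdxi_c (i := i) (g := e)
    have a6 := hdx_c (i := i+1) (g := e)
    rcases J with J | J | J | J | J
    · -- first letter `x i`
      by_cases hB : hd ((x i)⁻¹ * y) = 2*i+3
      · obtain ⟨y', h1, h2, h3⟩ := dex (i := i+1) (g := (x i)⁻¹ * y) (by omega)
        have ey : y = x i * x (i+1) * y' := by
          rw [mul_assoc, ← h1]; group
        have a7 := hdxi (i+1) ((x i)⁻¹ * e)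
        have e1 : hd (x (i+1) * ((x (i+1))⁻¹ * ((x i)⁻¹ * e))) = 2*i+2 := by
          rw [mul_inv_cancel_left]; omega
        have := ih y' (by omega) ((x (i+1))⁻¹ * ((x i)⁻¹ * e)) (by omega) (by omega)
        have ep : ph i y = x i * x (i+1) * ph i y' := by
          rw [ey, map_mul, map_mul, ph_A, ph_B]; group
        rcases this with h | h
        · left
          have := h.left (x i * x (i+1))
          rw [← ey, ← ep] at this
          convert this using 1
          group
        · right; rw [ep, h, ← ey]
      · left
        refine ⟨x i, ?_⟩
        unfold cyc3
        omega
    · left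
      by_cases hE : hd ((x i)⁻¹ * e) = 2*i+3
      · refine ⟨x i, ?_⟩
        unfold cyc3
        omega
      · apply cyc_of_hd
        unfold cyc3
        omega
    · left
      by_cases hE : hd ((x i)⁻¹ * e) = 2*i+3
      · refine ⟨x i, ?_⟩
        unfold cyc3
        omega
      · apply cyc_of_hd
        unfold cyc3
        omega
    · obtain ⟨y', h1, h2, h3⟩ := dexi (i := i+1) (g := y) (by omega)
      by_cases hB : hd y' = 2*i+2
      · obtain ⟨y'', g1, g2, g3⟩ := dexi (i := i) (g := y') (by omega)
        have ey : y = (x (i+1))⁻¹ * (x i)⁻¹ * y'' := by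
          rw [mul_assoc, ← g1, ← h1]
        have a7 := hdx i (x (i+1) * e)
        have e1 : hd ((x i)⁻¹ * (x i * (x (i+1) * e))) = 2*i+3 := by
          rw [inv_mul_cancel_left]; omega
        have := ih y'' (by omega) (x i * (x (i+1) * e)) (by omega) (by omega)
        have ep : ph i y = (x (i+1))⁻¹ * (x i)⁻¹ * ph i y'' := by
          rw [ey, map_mul, map_mul, map_inv, map_inv, ph_A, ph_B]; group
        rcases this with h | h
        · left
          have := h.left ((x (i+1))⁻¹ * (x i)⁻¹)
          rw [← ey, ← ep] at this
          convert this using 1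
          group
        · right; rw [ep, h, ← ey]
      · left
        have J' := (jf i _ y' rfl).split
        have ep : ph i y = (x i)⁻¹ * ph i y' := by
          rw [h1, map_mul, map_inv, ph_B]
        rw [← ep] at J'
        apply cyc_of_hd
        unfold cyc3
        omega
    · rcases hd_cases y with h | ⟨j, hj⟩ | ⟨j, hj⟩
      · exact absurd h y1
      · obtain ⟨y', h1, h2, h3⟩ := dex hj
        have a7 := hdxi j e
        have := ih y' (by omega) ((x j)⁻¹ * e) (by omega) (by omega)
        have ep : ph i y = x j * ph i y' := by
          rw [h1, map_mul, ph_o] <;> omega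
        rcases this with h | h
        · left
          have := h.left (x j)
          rw [← h1, ← ep, mul_inv_cancel_left] at this
          exact this
        · right; rw [ep, h, ← h1]
      · obtain ⟨y', h1, h2, h3⟩ := dexi hj
        have a7 := hdx j e
        have := ih y' (by omega) (x j * e) (by omega) (by omega)
        have ep : ph i y = (x j)⁻¹ * ph i y' := by
          rw [h1, map_mul, map_inv, ph_o] <;> omega
        rcases this with h | h
        · left
          have := h.left (x j)⁻¹
          rw [← h1, ← ep, inv_mul_cancel_left] at this
          exact this
        · right; rw [ep, h, ← h1]

theorem ph_le (i : ℕ) (y : F) : Cyc 1 (ph i y) y ∨ ph i y = y := by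
  by_cases h : y = 1
  · right; rw [h, map_one]
  · refine ph_le_aux i _ y le_rfl 1 (by simp [hd_one]) ?_
    left
    rw [hd_one]
    intro h'
    exact h (hd_eq_zero.1 h'.symm)

/-- If `h` lies before `x r` and only involves letters with index at least `r`, it starts with
`x r`. -/
theorem cyc_start (r : ℕ) (h : F) (hc : Cyc 1 h (x r)) (hr : hd h = 0 ∨ 2*r+1 ≤ hd h) :
    hd h = 2*r+1 := by
  obtain ⟨p, hp⟩ := hc
  by_cases p1 : p = 1
  · subst p1
    simp only [inv_one, one_mul, hd_one, hd_x] at hp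
    unfold cyc3 at hp
    omega
  have pn : p⁻¹ ≠ 1 := by simpa using p1
  have hdp : hd p ≠ 0 := fun h => p1 (hd_eq_zero.1 h)
  have hdpi : hd p⁻¹ ≠ 0 := fun h => pn (hd_eq_zero.1 h)
  rw [mul_one] at hp
  by_cases h2 : hd p = hd (x r)
  · by_contra h3
    have := (red_mul p⁻¹ h (by left; rw [inv_inv, h2, hd_x]; omega)).2 pn
    unfold cyc3 at hp
    omega
  · have := (red_mul p⁻¹ (x r) (by left; rw [inv_inv]; exact h2)).2 pn
    unfold cyc3 at hp
    omega

theorem aut_ext {f g : MulAut F} (h : ∀ j, f (x j) = g (x j)) : f = g := by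
  have : (f : F ≃* F).toMonoidHom = (g : F ≃* F).toMonoidHom := by
    ext j
    exact h j
  ext z
  exact DFunLike.congr_fun this z

theorem ph_comm (i j : ℕ) (h : i + 2 ≤ j) : ph i * ph j = ph j * ph i := by
  apply aut_ext
  intro k
  rw [MulAut.mul_apply, MulAut.mul_apply]
  by_cases k1 : k = i
  · subst k1
    rw [ph_o j k (by omega) (by omega), ph_A, map_mul, map_mul, map_inv,
      ph_o j k (by omega) (by omega), ph_o j (k+1) (by omega) (by omega)]
  by_cases k2 : k = i + 1
  · subst k2
    rw [ph_o j (i+1) (by omega) (by omega), ph_B, ph_o j i (by omega) (by omega)]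
  by_cases k3 : k = j
  · subst k3
    rw [ph_o i k (by omega) (by omega), ph_A, map_mul, map_mul, map_inv,
      ph_o i k (by omega) (by omega), ph_o i (k+1) (by omega) (by omega)]
  by_cases k4 : k = j + 1
  · subst k4
    rw [ph_o i (j+1) (by omega) (by omega), ph_B, ph_o i j (by omega) (by omega)]
  rw [ph_o i k k1 k2, ph_o j k k3 k4, ph_o i k k1 k2]

theorem ph_braid (i : ℕ) : ph i * ph (i+1) * ph i = ph (i+1) * ph i * ph (i+1) := by
  apply aut_ext
  intro k
  simp only [MulAut.mul_apply]
  have a1 := ph_A i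
  have a2 := ph_B i
  have a3 := ph_A (i+1)
  have a4 := ph_B (i+1)
  have a5 := ph_o i (i+1+1) (by omega) (by omega)
  have a6 := ph_o (i+1) i (by omega) (by omega)
  by_cases k1 : k = i
  · subst k1
    simp only [a1, a2, a3, a4, a5, a6, map_mul, map_inv]
    group
  by_cases k2 : k = i + 1
  · subst k2
    simp only [a1, a2, a3, a4, a5, a6, map_mul, map_inv]
  by_cases k3 : k = i + 1 + 1
  · subst k3
    simp only [a1, a2, a3, a4, a5, a6, map_mul, map_inv]
  simp only [ph_o i k k1 k2, ph_o (i+1) k k2 k3]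

/-- The images of the generators. -/
noncomputable def sg (n i : ℕ) : MulAut F := if 1 ≤ i ∧ i ≤ n - 1 then ph i else 1

theorem sg_rels (n : ℕ) : ∀ r ∈ braidRels n, FreeGroup.lift (sg n) r = 1 := by
  rintro r (⟨i, j, h1, h2, h3, rfl⟩ | ⟨i, h1, h2, rfl⟩ | ⟨i, h1, rfl⟩)
  · simp only [_root_.map_mul, _root_.map_inv, lift_apply_of, sg]
    rw [if_pos (by omega), if_pos (by omega), ph_comm i j h2]
    group
  · simp only [_root_.map_mul, _root_.map_inv, lift_apply_of, sg]
    rw [if_pos (by omega), if_pos (by omega), ph_braid i]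
    group
  · simp only [lift_apply_of, sg]
    by_cases h : 1 ≤ i ∧ i ≤ n - 1
    · omega
    · rw [if_neg h]

/-- The Artin action of the braid group on the free group. -/
noncomputable def act (n : ℕ) : Braid n →* MulAut F := PresentedGroup.toGroup (sg_rels n)

theorem act_gen {n j : ℕ} (h1 : 1 ≤ j) (h2 : j ≤ n - 1) : act n (genσ n j) = ph j := by
  unfold act genσ
  rw [PresentedGroup.toGroup.of, sg, if_pos ⟨h1, h2⟩]

theorem gen_kill {n j : ℕ} (h : j = 0 ∨ n ≤ j) : genσ n j = 1 := by
  unfold genσ PresentedGroup.of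
  exact PresentedGroup.one_of_mem (Or.inr (Or.inr ⟨j, h, rfl⟩))

theorem gen_comm {n i j : ℕ} (h1 : 1 ≤ i) (h2 : i + 2 ≤ j) (h3 : j ≤ n - 1) :
    genσ n i * genσ n j = genσ n j * genσ n i := by
  have : genσ n i * genσ n j * (genσ n i)⁻¹ * (genσ n j)⁻¹ = 1 :=
    PresentedGroup.one_of_mem (rels := braidRels n) (Or.inl ⟨i, j, h1, h2, h3, rfl⟩)
  rw [mul_inv_eq_one, mul_inv_eq_iff_eq_mul] at this
  exact this

theorem gen_braid {n i : ℕ} (h1 : 1 ≤ i) (h2 : i + 1 ≤ n - 1) :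
    genσ n i * genσ n (i+1) * genσ n i = genσ n (i+1) * genσ n i * genσ n (i+1) := by
  have : genσ n i * genσ n (i+1) * genσ n i * (genσ n (i+1) * genσ n i * genσ n (i+1))⁻¹ = 1 :=
    PresentedGroup.one_of_mem (rels := braidRels n) (Or.inr (Or.inl ⟨i, h1, h2, rfl⟩))
  rw [mul_inv_eq_one] at this
  exact this

/-- The subgroup generated by `σ_j` with `r ≤ j`. -/
def H (n r : ℕ) : Subgroup (Braid n) :=
  Subgroup.closure {g | ∃ j, r ≤ j ∧ 1 ≤ j ∧ j ≤ n - 1 ∧ g = genσ n j}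

theorem gen_mem {n r j : ℕ} (h : r ≤ j) (h1 : 1 ≤ j) (h2 : j ≤ n - 1) : genσ n j ∈ H n r :=
  Subgroup.subset_closure ⟨j, h, h1, h2, rfl⟩

theorem H_top (n : ℕ) : H n 1 = ⊤ := by
  rw [eq_top_iff, ← PresentedGroup.closure_range_of (braidRels n), Subgroup.closure_le]
  rintro _ ⟨j, rfl⟩
  change genσ n j ∈ H n 1
  by_cases h : j = 0 ∨ n ≤ j
  · rw [gen_kill h]; exact one_mem _
  · exact gen_mem (by omega) (by omega) (by omega)

theorem H_bot {n r : ℕ} (h : n ≤ r) : H n r = ⊥ := by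
  rw [H, Subgroup.closure_eq_bot_iff]
  rintro _ ⟨j, h1, h2, h3, rfl⟩
  omega

theorem H_ind {n r : ℕ} {P : Braid n → Prop} (one : P 1)
    (pos : ∀ g j, g ∈ H n r → r ≤ j → 1 ≤ j → j ≤ n - 1 → P g → P (g * genσ n j))
    (neg : ∀ g j, g ∈ H n r → r ≤ j → 1 ≤ j → j ≤ n - 1 → P g → P (g * (genσ n j)⁻¹))
    {g : Braid n} (hg : g ∈ H n r) : P g := by
  induction hg using Subgroup.closure_induction_right with
  | one => exact one
  | mul_right g hg s hs ih =>
    obtain ⟨j, h1, h2, h3, rfl⟩ := hs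
    exact pos g j hg h1 h2 h3 ih
  | mul_inv_cancel g hg s hs ih =>
    obtain ⟨j, h1, h2, h3, rfl⟩ := hs
    exact neg g j hg h1 h2 h3 ih

theorem act_mg {n j : ℕ} (g : Braid n) (h1 : 1 ≤ j) (h2 : j ≤ n - 1) (z : F) :
    act n (g * genσ n j) z = act n g (ph j z) := by
  rw [_root_.map_mul, act_gen h1 h2, MulAut.mul_apply]

theorem act_mgi {n j : ℕ} (g : Braid n) (h1 : 1 ≤ j) (h2 : j ≤ n - 1) (z : F) :
    act n (g * (genσ n j)⁻¹) z = act n g ((ph j)⁻¹ z) := by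
  rw [_root_.map_mul, _root_.map_inv, act_gen h1 h2, MulAut.mul_apply]

/-- Cyclic order is preserved by the action. -/
theorem cyc_act {n : ℕ} (g : Braid n) : ∀ (u v w : F), Cyc u v w →
    Cyc (act n g u) (act n g v) (act n g w) := by
  have hg : g ∈ H n 1 := by rw [H_top]; trivial
  refine H_ind (P := fun g => ∀ (u v w : F), Cyc u v w →
    Cyc (act n g u) (act n g v) (act n g w)) ?_ ?_ ?_ hg
  · intro u v w h; simpa using h
  · intro g j _ _ h1 h2 ih u v w h
    simp only [act_mg g h1 h2]
    exact ih _ _ _ (cyc_ph j h)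
  · intro g j _ _ h1 h2 ih u v w h
    simp only [act_mgi g h1 h2]
    exact ih _ _ _ (cyc_phi j h)

theorem conj_le {n : ℕ} (g : Braid n) {i : ℕ} (h1 : 1 ≤ i) (h2 : i ≤ n - 1) (v : F) :
    Cyc 1 (act n (g * genσ n i * g⁻¹) v) v ∨ act n (g * genσ n i * g⁻¹) v = v := by
  have e : act n (g * genσ n i * g⁻¹) v = act n g (ph i ((act n g)⁻¹ v)) := by
    rw [_root_.map_mul, _root_.map_mul, act_gen h1 h2, _root_.map_inv]; rfl
  have e2 : act n g ((act n g)⁻¹ v) = v := by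
    rw [← MulAut.mul_apply, mul_inv_cancel]; rfl
  rw [e]
  rcases ph_le i ((act n g)⁻¹ v) with h | h
  · left
    have := cyc_act g _ _ _ h
    rwa [map_one, e2] at this
  · right
    rw [h, e2]

/-- All letters of `g` have index at least `r`. -/
def Kr (r : ℕ) (g : F) : Prop := ∀ p ∈ g.toWord, r ≤ p.1

theorem Kr.mul {r : ℕ} {g h : F} (hg : Kr r g) (hh : Kr r h) : Kr r (g * h) := by
  intro p hp
  have := (toWord_mul_sublist g h).subset hp
  rcases List.mem_append.1 this with h1 | h1
  · exact hg p h1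
  · exact hh p h1

theorem Kr.inv {r : ℕ} {g : F} (hg : Kr r g) : Kr r g⁻¹ := by
  intro p hp
  rw [toWord_inv] at hp
  simp only [FreeGroup.invRev, List.mem_reverse, List.mem_map] at hp
  obtain ⟨q, hq, rfl⟩ := hp
  exact hg q hq

theorem Kr_x {r j : ℕ} (h : r ≤ j) : Kr r (x j) := by
  intro p hp
  rw [toWord_of] at hp
  simp at hp
  subst hp
  exact h

theorem Kr.hd {r : ℕ} {g : F} (hg : Kr r g) : hd g = 0 ∨ 2 * r + 1 ≤ hd g := by
  unfold Kr at hg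
  unfold PropS.hd
  cases h : g.toWord with
  | nil => left; rfl
  | cons s t =>
    right
    have := hg s (by rw [h]; simp)
    simp only [hdl, ix]
    split_ifs <;> omega

theorem Kr_act {n r : ℕ} {g : Braid n} (hg : g ∈ H n r) : ∀ k, r ≤ k → Kr r (act n g (x k)) := by
  refine H_ind (P := fun g => ∀ k, r ≤ k → Kr r (act n g (x k))) ?_ ?_ ?_ hg
  · intro k hk
    rw [_root_.map_one]
    exact Kr_x hk
  · intro g j _ h0 h1 h2 ih k hk
    rw [act_mg g h1 h2]
    by_cases k1 : k = j
    · subst k1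
      rw [ph_A, map_mul, map_mul, map_inv]
      exact ((ih _ hk).mul (ih _ (by omega))).mul (ih _ hk).inv
    by_cases k2 : k = j + 1
    · subst k2
      rw [ph_B]
      exact ih _ h0
    rw [ph_o j k k1 k2]
    exact ih _ hk
  · intro g j _ h0 h1 h2 ih k hk
    rw [act_mgi g h1 h2]
    by_cases k1 : k = j
    · subst k1
      rw [phi_A]
      exact ih _ (by omega)
    by_cases k2 : k = j + 1
    · subst k2
      rw [phi_B, map_mul, map_mul, map_inv]
      exact ((ih _ (by omega)).inv.mul (ih _ (by omega))).mul (ih _ (by omega))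
    rw [phi_o j k k1 k2]
    exact ih _ hk

theorem fix_low {n r k : ℕ} {g : Braid n} (hg : g ∈ H n r) (hk : k < r) :
    act n g (x k) = x k := by
  refine H_ind (P := fun g => act n g (x k) = x k) ?_ ?_ ?_ hg
  · rw [_root_.map_one]; rfl
  · intro g j _ h0 h1 h2 ih
    rw [act_mg g h1 h2, ph_o j k (by omega) (by omega), ih]
  · intro g j _ h0 h1 h2 ih
    rw [act_mgi g h1 h2, phi_o j k (by omega) (by omega), ih]

theorem fix_high {n r k : ℕ} {g : Braid n} (hg : g ∈ H n r) (hk : n < k) :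
    act n g (x k) = x k := by
  refine H_ind (P := fun g => act n g (x k) = x k) ?_ ?_ ?_ hg
  · rw [_root_.map_one]; rfl
  · intro g j _ h0 h1 h2 ih
    rw [act_mg g h1 h2, ph_o j k (by omega) (by omega), ih]
  · intro g j _ h0 h1 h2 ih
    rw [act_mgi g h1 h2, phi_o j k (by omega) (by omega), ih]

/-- Either the first strand is fixed, or it is moved in the positive direction. -/
theorem conj_start {n r : ℕ} (g : Braid n) {i : ℕ} (h1 : 1 ≤ i) (h2 : i ≤ n - 1)
    (hH : g * genσ n i * g⁻¹ ∈ H n r) :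
    hd (act n (g * genσ n i * g⁻¹) (x r)) = 2 * r + 1 := by
  rcases conj_le g h1 h2 (x r) with h | h
  · exact cyc_start r _ h (Kr_act hH r le_rfl).hd
  · rw [h, hd_x]

/-- Exponent sum. -/
theorem conj_ne_one {n : ℕ} (g : Braid n) {i : ℕ} (h1 : 1 ≤ i) (h2 : i ≤ n - 1) :
    g * genσ n i * g⁻¹ ≠ 1 := by
  have hr : ∀ r ∈ braidRels n, FreeGroup.lift (fun j : ℕ => if 1 ≤ j ∧ j ≤ n - 1 then
      Multiplicative.ofAdd (1:ℤ) else 1) r = 1 := by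
    rintro r (⟨i, j, h1, h2, h3, rfl⟩ | ⟨i, h1, h2, rfl⟩ | ⟨i, h1, rfl⟩)
    · simp only [_root_.map_mul, _root_.map_inv, lift_apply_of]
      rw [if_pos (by omega), if_pos (by omega)]
      group
    · simp only [_root_.map_mul, _root_.map_inv, lift_apply_of]
      rw [if_pos (by omega), if_pos (by omega)]
      group
    · simp only [lift_apply_of]
      rw [if_neg (by omega)]
  intro h
  rw [conj_eq_one_iff] at h
  have := congrArg (PresentedGroup.toGroup hr) h
  rw [genσ, PresentedGroup.toGroup.of, if_pos ⟨h1, h2⟩] at this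
  have h3 := congrArg Multiplicative.toAdd (this.trans (_root_.map_one _))
  simp at h3

section grp
variable {G : Type*} [Group G]

theorem b3_a {a b : G} (h : a * b * a = b * a * b) : b * (a * a) * b * (a * a) = (a * a) * b * (a * a) * b := by
  have h1 : b * (a * a) * b * a = a * (b * (a * a) * b) := by
    calc b * (a * a) * b * a = b * a * (a * b * a) := by group
      _ = b * a * b * a * b := by rw [h]; group
      _ = a * (b * (a * a) * b) := by rw [← h]; group
  calc b * (a * a) * b * (a * a) = (b * (a * a) * b * a) * a := by group
    _ = a * (a * (b * (a * a) * b)) := by rw [h1, mul_assoc a, h1]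
    _ = _ := by group

theorem b3_b {a b : G} (h : a * b * a = b * a * b) : a * (b * b) * a⁻¹ = b⁻¹ * (a * a) * b := by
  rw [mul_inv_eq_iff_eq_mul, eq_comm, mul_assoc, mul_assoc, inv_mul_eq_iff_eq_mul]
  calc a * a * (b * a) = a * (a * b * a) := by group
    _ = (a * b * a) * b := by rw [h]; simp only [← mul_assoc]; rw [h]
    _ = _ := by rw [h]; group

theorem rel_a {A s : G} (h : s * A * s * A = A * s * A * s) : s * A * s⁻¹ = A⁻¹ * (s⁻¹ * A * s) * A := by
  have : A = s⁻¹ * A⁻¹ * s⁻¹ * A * s * A * s := by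
    calc A = s⁻¹ * A⁻¹ * s⁻¹ * (s * A * s * A) := by group
      _ = _ := by rw [h]; group
  calc s * A * s⁻¹ = s * (s⁻¹ * A⁻¹ * s⁻¹ * A * s * A * s) * s⁻¹ := by rw [← this]
    _ = _ := by group

theorem rel_b {A s : G} (h : s * A * s * A = A * s * A * s) :
    s⁻¹ * (s⁻¹ * A * s) * s = (s⁻¹ * A * s) * A * (s⁻¹ * A * s)⁻¹ := by
  have : A * s * A = s * A * s * A * s⁻¹ := by rw [h]; group
  calc s⁻¹ * (s⁻¹ * A * s) * s = s⁻¹ * s⁻¹ * (s * A * s * A * s⁻¹) * A⁻¹ * s := by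
        rw [← this]; group
    _ = _ := by group

end grp

/-- The elements `A_{r+1+m}`. -/
def AA (n r : ℕ) : ℕ → Braid n
  | 0 => genσ n r * genσ n r
  | m + 1 => (genσ n (r+1+m))⁻¹ * AA n r m * genσ n (r+1+m)

/-- The elements `σ_r ⋯ σ_{r+m-1}`. -/
def TT (n r : ℕ) : ℕ → Braid n
  | 0 => 1
  | m + 1 => TT n r m * genσ n (r+m)

theorem gen_commute {n i j : ℕ} (h1 : 1 ≤ i) (h2 : i + 2 ≤ j) (h3 : j ≤ n - 1) :
    Commute (genσ n i) (genσ n j) := gen_comm h1 h2 h3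

theorem TT_commute {n r : ℕ} (hr : 1 ≤ r) (m j : ℕ) (h : r + m + 1 ≤ j) (hj : j ≤ n - 1) :
    Commute (TT n r m) (genσ n j) := by
  induction m with
  | zero => exact Commute.one_left _
  | succ m ih => exact (ih (by omega)).mul_left (gen_commute (by omega) (by omega) hj)

theorem TT_shift {n r : ℕ} (hr : 1 ≤ r) : ∀ (m j : ℕ), r ≤ j → j + 1 < r + m → r + m ≤ n →
    TT n r m * genσ n j = genσ n (j+1) * TT n r m := by
  intro m
  induction m with
  | zero => intro j h1 h2 h3; omega
  | succ m ih =>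
    intro j h1 h2 h3
    by_cases hj : j + 1 < r + m
    · have c := (gen_commute (n := n) (i := j) (j := r+m) (by omega) (by omega) (by omega)).eq
      rw [TT, mul_assoc, ← c, ← mul_assoc, ih j h1 hj (by omega), mul_assoc]
    · obtain ⟨m', rfl⟩ : ∃ m', m = m' + 1 := ⟨m - 1, by omega⟩
      obtain rfl : j = r + m' := by omega
      have b := gen_braid (n := n) (i := r + m') (by omega) (by omega)
      have c := (TT_commute hr m' (r+m'+1) (by omega) (by omega) : Commute (TT n r m') _).eq
      rw [TT, TT, ← Nat.add_assoc r m' 1]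
      calc TT n r m' * genσ n (r+m') * genσ n (r+m'+1) * genσ n (r+m')
          = TT n r m' * (genσ n (r+m') * genσ n (r+m'+1) * genσ n (r+m')) := by group
        _ = (TT n r m' * genσ n (r+m'+1)) * genσ n (r+m') * genσ n (r+m'+1) := by rw [b]; group
        _ = _ := by rw [c]; group

theorem TT_sq {n r : ℕ} (hr : 1 ≤ r) : ∀ m, r + m ≤ n - 1 →
    TT n r m * (genσ n (r+m) * genσ n (r+m)) * (TT n r m)⁻¹ = AA n r m := by
  intro m
  induction m with
  | zero => intro _; simp [TT, AA]
  | succ m ih =>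
    intro h
    have b := b3_b (gen_braid (n := n) (i := r + m) (by omega) (by omega))
    have c := (TT_commute hr m (r+m+1) (by omega) (by omega) : Commute (TT n r m) _)
    rw [TT, AA, ← ih (by omega), ← Nat.add_assoc r m 1, Nat.add_right_comm r 1 m]
    have c1 := c.eq
    have c2 := c.inv_inv.eq
    have c3 := c.inv_left.eq
    have c4 := c.inv_right.eq
    calc TT n r m * genσ n (r + m) * (genσ n (r + m + 1) * genσ n (r + m + 1)) *
          (TT n r m * genσ n (r + m))⁻¹
        = TT n r m * (genσ n (r + m) * (genσ n (r + m + 1) * genσ n (r + m + 1)) *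
            (genσ n (r + m))⁻¹) * (TT n r m)⁻¹ := by group
      _ = (TT n r m * (genσ n (r + m + 1))⁻¹) * (genσ n (r + m) * genσ n (r + m)) *
            (genσ n (r + m + 1) * (TT n r m)⁻¹) := by rw [b]; group
      _ = _ := by rw [c4, ← c3]; group

theorem AA_rel {n r : ℕ} (hr : 1 ≤ r) (m : ℕ) (h : r + 1 + m ≤ n - 1) :
    genσ n (r+1+m) * AA n r m * genσ n (r+1+m) * AA n r m =
      AA n r m * genσ n (r+1+m) * AA n r m * genσ n (r+1+m) := by
  rw [← TT_sq hr m (by omega), Nat.add_right_comm r 1 m]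
  have b := b3_a (gen_braid (n := n) (i := r + m) (by omega) (by omega))
  have c := (TT_commute hr m (r+m+1) (by omega) (by omega) : Commute (TT n r m) _)
  have e : genσ n (r+m+1) = TT n r m * genσ n (r+m+1) * (TT n r m)⁻¹ := by
    rw [c.eq]; group
  rw [e]
  have e2 := congrArg (fun z => TT n r m * z * (TT n r m)⁻¹) b
  calc _ = TT n r m * (genσ n (r + m + 1) * (genσ n (r + m) * genσ n (r + m)) *
      genσ n (r + m + 1) * (genσ n (r + m) * genσ n (r + m))) * (TT n r m)⁻¹ := by group
    _ = _ := by refine e2.trans ?_; group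

/-- The free normal subgroup. -/
def UU (n r : ℕ) : Subgroup (Braid n) := Subgroup.closure {g | ∃ m, r + 1 + m ≤ n ∧ g = AA n r m}

theorem AA_mem {n r m : ℕ} (h : r + 1 + m ≤ n) : AA n r m ∈ UU n r :=
  Subgroup.subset_closure ⟨m, h, rfl⟩

theorem AA_norm {n r : ℕ} (hr : 1 ≤ r) {j : ℕ} (h1 : r + 1 ≤ j) (h2 : j ≤ n - 1) (m : ℕ)
    (hm : r + 1 + m ≤ n) :
    genσ n j * AA n r m * (genσ n j)⁻¹ ∈ UU n r ∧ (genσ n j)⁻¹ * AA n r m * genσ n j ∈ UU n r := by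
  by_cases hj : j = r + 1 + m
  · subst hj
    refine ⟨?_, AA_mem (m := m+1) (by omega)⟩
    rw [rel_a (AA_rel hr m h2)]
    exact mul_mem (mul_mem (inv_mem (AA_mem hm)) (AA_mem (m := m+1) (by omega))) (AA_mem hm)
  by_cases hj' : j + 1 = r + 1 + m
  · obtain ⟨m', rfl⟩ : ∃ m', m = m' + 1 := ⟨m - 1, by omega⟩
    obtain rfl : j = r + 1 + m' := by omega
    have a1 := AA_mem (n := n) (r := r) (m := m') (by omega)
    have a2 := AA_mem hm
    constructor
    · rw [AA]
      convert a1 using 1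
      group
    · rw [AA, rel_b (AA_rel hr m' h2)]
      rw [AA] at a2
      exact mul_mem (mul_mem a2 a1) (inv_mem a2)
  have key : Commute (genσ n j) (AA n r m) := by
    rw [← TT_sq hr m (by omega)]
    by_cases h3 : r + m + 2 ≤ j
    · have c1 := (TT_commute hr m j (by omega) h2).symm
      have c2 := (gen_commute (n := n) (i := r + m) (j := j) (by omega) (by omega) h2).symm
      exact (c1.mul_right (c2.mul_right c2)).mul_right c1.inv_right
    · obtain ⟨j', rfl⟩ : ∃ j', j = j' + 1 := ⟨j - 1, by omega⟩
      have s := TT_shift hr m j' (by omega) (by omega) (by omega : r + m ≤ n)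
      have c := (gen_commute (n := n) (i := j') (j := r + m) (by omega) (by omega) (by omega))
      have c2 := (c.mul_right c).eq
      have e : genσ n (j'+1) = TT n r m * genσ n j' * (TT n r m)⁻¹ := by
        rw [s]; group
      rw [e]
      have e2 := congrArg (fun z => TT n r m * z * (TT n r m)⁻¹) c2
      change _ = _
      calc _ = TT n r m * (genσ n j' * (genσ n (r + m) * genσ n (r + m))) * (TT n r m)⁻¹ := by group
        _ = _ := by refine e2.trans ?_; group
  constructor
  · rw [key.eq, mul_inv_cancel_right]; exact AA_mem hm
  · rw [mul_assoc, ← key.eq, inv_mul_cancel_left]; exact AA_mem hm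

theorem UU_norm1 {n r : ℕ} (hr : 1 ≤ r) {j : ℕ} (h1 : r + 1 ≤ j) (h2 : j ≤ n - 1) {u : Braid n}
    (hu : u ∈ UU n r) :
    genσ n j * u * (genσ n j)⁻¹ ∈ UU n r ∧ (genσ n j)⁻¹ * u * genσ n j ∈ UU n r := by
  induction hu using Subgroup.closure_induction with
  | mem u hu =>
    obtain ⟨m, hm, rfl⟩ := hu
    exact AA_norm hr h1 h2 m hm
  | one => simp [one_mem]
  | mul u v _ _ hu hv =>
    have a := mul_mem hu.1 hv.1
    have b := mul_mem hu.2 hv.2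
    constructor
    · convert a using 1; group
    · convert b using 1; group
  | inv u _ hu =>
    have a := inv_mem hu.1
    have b := inv_mem hu.2
    constructor
    · convert a using 1; group
    · convert b using 1; group

theorem UU_norm {n r : ℕ} (hr : 1 ≤ r) {h : Braid n} (hh : h ∈ H n (r+1)) :
    ∀ u ∈ UU n r, h * u * h⁻¹ ∈ UU n r := by
  refine H_ind (P := fun h => ∀ u ∈ UU n r, h * u * h⁻¹ ∈ UU n r) ?_ ?_ ?_ hh
  · intro u hu; simpa using hu
  · intro g j _ h0 h1 h2 ih u hu
    have := ih _ (UU_norm1 hr h0 h2 hu).1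
    convert this using 1; group
  · intro g j _ h0 h1 h2 ih u hu
    have := ih _ (UU_norm1 hr h0 h2 hu).2
    convert this using 1; group

theorem decomp_H {n r : ℕ} (hr : 1 ≤ r) (hrn : r ≤ n) {g : Braid n} (hg : g ∈ H n r) :
    ∃ u ∈ UU n r, ∃ h ∈ H n (r+1), ∃ m, r + m ≤ n ∧ g = u * h * TT n r m := by
  refine H_ind (P := fun g => ∃ u ∈ UU n r, ∃ h ∈ H n (r+1), ∃ m, r + m ≤ n ∧ g = u * h * TT n r m)
    ?_ ?_ ?_ hg
  · exact ⟨1, one_mem _, 1, one_mem _, 0, by omega, by simp [TT]⟩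
  · rintro g j _ h0 h1 h2 ⟨u, hu, h, hh, m, hm, rfl⟩
    by_cases c1 : r + m + 1 ≤ j
    · refine ⟨u, hu, h * genσ n j, mul_mem hh (gen_mem (by omega) h1 h2), m, hm, ?_⟩
      rw [mul_assoc, (TT_commute hr m j c1 h2).eq]; group
    by_cases c2 : j = r + m
    · subst c2
      exact ⟨u, hu, h, hh, m+1, by omega, by rw [TT]; group⟩
    obtain ⟨m', rfl⟩ : ∃ m', m = m' + 1 := ⟨m - 1, by omega⟩
    by_cases c3 : j = r + m'
    · subst c3
      refine ⟨u * (h * AA n r m' * h⁻¹), mul_mem hu (UU_norm hr hh _ (AA_mem (by omega))), h, hh, m',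
        by omega, ?_⟩
      rw [TT, ← TT_sq hr m' h2]; group
    · refine ⟨u, hu, h * genσ n (j+1), mul_mem hh (gen_mem (by omega) (by omega) (by omega)), m'+1,
        hm, ?_⟩
      rw [mul_assoc, TT_shift hr (m'+1) j h0 (by omega) hm]; group
  · rintro g j _ h0 h1 h2 ⟨u, hu, h, hh, m, hm, rfl⟩
    by_cases c1 : r + m + 1 ≤ j
    · refine ⟨u, hu, h * (genσ n j)⁻¹, mul_mem hh (inv_mem (gen_mem (by omega) h1 h2)), m, hm, ?_⟩
      rw [mul_assoc, (TT_commute hr m j c1 h2).inv_right.eq]; group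
    by_cases c2 : j = r + m
    · subst c2
      refine ⟨u * (h * (AA n r m)⁻¹ * h⁻¹),
        mul_mem hu (UU_norm hr hh _ (inv_mem (AA_mem (by omega)))), h, hh, m+1, by omega, ?_⟩
      rw [TT, ← TT_sq hr m h2]; group
    obtain ⟨m', rfl⟩ : ∃ m', m = m' + 1 := ⟨m - 1, by omega⟩
    by_cases c3 : j = r + m'
    · subst c3
      exact ⟨u, hu, h, hh, m', by omega, by rw [TT]; group⟩
    · refine ⟨u, hu, h * (genσ n (j+1))⁻¹, mul_mem hh (inv_mem (gen_mem (by omega) (by omega)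
        (by omega))), m'+1, hm, ?_⟩
      have s := TT_shift hr (m'+1) j h0 (by omega) hm
      have : TT n r (m'+1) * (genσ n j)⁻¹ = (genσ n (j+1))⁻¹ * TT n r (m'+1) := by
        rw [mul_inv_eq_iff_eq_mul, mul_assoc, s]; group
      rw [mul_assoc, this]; group

/-- The projection killing `x r`. -/
def PP (r : ℕ) : F →* F := FreeGroup.lift (fun j => if j = r then 1 else x j)

theorem PP_r (r : ℕ) : PP r (x r) = 1 := by simp [PP]

theorem PP_o {r j : ℕ} (h : j ≠ r) : PP r (x j) = x j := by simp [PP, h]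

theorem PP_ph {r j : ℕ} (h : r < j) (z : F) : PP r (ph j z) = ph j (PP r z) := by
  have : (PP r).comp (ph j : F ≃* F).toMonoidHom = ((ph j : F ≃* F).toMonoidHom).comp (PP r) := by
    ext k
    change PP r (ph j (x k)) = ph j (PP r (x k))
    by_cases k1 : k = j
    · subst k1
      rw [PP_o (by omega), ph_A, _root_.map_mul, _root_.map_mul, _root_.map_inv, PP_o (by omega),
        PP_o (by omega)]
    by_cases k2 : k = j + 1
    · subst k2
      rw [PP_o (by omega), ph_B, PP_o (by omega)]
    rw [ph_o j k k1 k2]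
    by_cases k3 : k = r
    · subst k3; rw [PP_r, map_one]
    · rw [PP_o k3, ph_o j k k1 k2]
  exact DFunLike.congr_fun this z

theorem PP_phi {r j : ℕ} (h : r < j) (z : F) : PP r ((ph j)⁻¹ z) = (ph j)⁻¹ (PP r z) := by
  have := PP_ph h ((ph j)⁻¹ z)
  rw [MulAut.apply_inv_self] at this
  rw [this, MulAut.inv_apply_self]

theorem PP_H {n r : ℕ} {h : Braid n} (hh : h ∈ H n (r+1)) : ∀ z : F,
    PP r (act n h z) = act n h (PP r z) := by
  refine H_ind (P := fun h => ∀ z : F, PP r (act n h z) = act n h (PP r z)) ?_ ?_ ?_ hh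
  · intro z; rw [_root_.map_one]; rfl
  · intro g j _ h0 h1 h2 ih z
    rw [act_mg g h1 h2, act_mg g h1 h2, ih, PP_ph (by omega)]
  · intro g j _ h0 h1 h2 ih z
    rw [act_mgi g h1 h2, act_mgi g h1 h2, ih, PP_phi (by omega)]

theorem act_mul {n : ℕ} (g h : Braid n) (z : F) : act n (g * h) z = act n g (act n h z) := by
  rw [_root_.map_mul]; rfl

theorem act_inv_self {n : ℕ} (g : Braid n) (z : F) : act n g⁻¹ (act n g z) = z := by
  rw [_root_.map_inv, MulAut.inv_apply_self]

theorem act_self_inv {n : ℕ} (g : Braid n) (z : F) : act n g (act n g⁻¹ z) = z := by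
  rw [_root_.map_inv, MulAut.apply_inv_self]

theorem PP_AA {n r : ℕ} (hr : 1 ≤ r) (m : ℕ) (hm : r + 1 + m ≤ n) : ∀ z : F,
    PP r (act n (AA n r m) z) = PP r z := by
  induction m with
  | zero =>
    have : (PP r).comp (act n (AA n r 0) : F ≃* F).toMonoidHom = PP r := by
      ext k
      change PP r (act n (AA n r 0) (x k)) = PP r (x k)
      rw [AA, act_mul, act_gen hr (by omega)]
      by_cases k1 : k = r
      · subst k1
        simp only [ph_A, ph_B, map_mul, map_inv, _root_.map_mul, _root_.map_inv, PP_r]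
        group
      by_cases k2 : k = r + 1
      · subst k2
        simp only [ph_A, ph_B, map_mul, map_inv, _root_.map_mul, _root_.map_inv, PP_r]
        group
      rw [ph_o r k k1 k2, ph_o r k k1 k2]
    intro z
    exact DFunLike.congr_fun this z
  | succ m ih =>
    intro z
    have g1 : genσ n (r+1+m) ∈ H n (r+1) := gen_mem (by omega) (by omega) (by omega)
    rw [AA, act_mul, act_mul, PP_H (inv_mem g1), ih (by omega), PP_H g1, act_inv_self]

theorem PP_UU {n r : ℕ} (hr : 1 ≤ r) {u : Braid n} (hu : u ∈ UU n r) : ∀ z : F,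
    PP r (act n u z) = PP r z := by
  induction hu using Subgroup.closure_induction with
  | mem u hu =>
    obtain ⟨m, hm, rfl⟩ := hu
    exact PP_AA hr m hm
  | one => intro z; rw [_root_.map_one]; rfl
  | mul u v _ _ hu hv => intro z; rw [act_mul, hu, hv]
  | inv u _ hu => intro z; rw [← hu, act_self_inv]

/-- An antihomomorphism reconstructing elements of `UU`. -/
noncomputable def Ps (n r : ℕ) (c : F) : Braid n :=
  (FreeGroup.lift (fun k => (AA n r (k - (r+1)))⁻¹) c)⁻¹

theorem Ps_mul (n r : ℕ) (c d : F) : Ps n r (c * d) = Ps n r d * Ps n r c := by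
  simp [Ps]

theorem Ps_inv (n r : ℕ) (c : F) : Ps n r c⁻¹ = (Ps n r c)⁻¹ := by
  simp [Ps]

theorem Ps_one (n r : ℕ) : Ps n r 1 = 1 := by
  simp [Ps]

theorem AA_c {n r : ℕ} (hr : 1 ≤ r) (m : ℕ) (hm : r + 1 + m ≤ n) :
    ∃ c, act n (AA n r m) (x r) = c * x r * c⁻¹ ∧ PP r c = x (r+1+m) := by
  induction m with
  | zero =>
    refine ⟨x r * x (r+1), ?_, ?_⟩
    · rw [AA, act_mul, act_gen hr (by omega)]
      simp only [ph_A, ph_B, map_mul, map_inv]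
      group
    · rw [_root_.map_mul, PP_r, PP_o (by omega), one_mul]
  | succ m ih =>
    obtain ⟨c, h1, h2⟩ := ih (by omega)
    have g1 : genσ n (r+1+m) ∈ H n (r+1) := gen_mem (by omega) (by omega) (by omega)
    refine ⟨act n (genσ n (r+1+m))⁻¹ c, ?_, ?_⟩
    · rw [AA, act_mul, act_mul, fix_low g1 (by omega), h1, map_mul, map_mul, map_inv (act n (genσ n (r+1+m))⁻¹) c,
        fix_low (inv_mem g1) (by omega)]
    · rw [PP_H (inv_mem g1), h2, _root_.map_inv, act_gen (by omega) (by omega), phi_A]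
      rfl

theorem UU_c {n r : ℕ} (hr : 1 ≤ r) {u : Braid n} (hu : u ∈ UU n r) :
    ∃ c, act n u (x r) = c * x r * c⁻¹ ∧ Ps n r (PP r c) = u := by
  induction hu using Subgroup.closure_induction with
  | mem u hu =>
    obtain ⟨m, hm, rfl⟩ := hu
    obtain ⟨c, h1, h2⟩ := AA_c hr m hm
    refine ⟨c, h1, ?_⟩
    rw [h2]
    simp [Ps]
  | one => exact ⟨1, by rw [_root_.map_one]; simp, by rw [_root_.map_one, Ps_one]⟩
  | mul u v hu' hv' hu hv =>
    obtain ⟨c, h1, h2⟩ := hu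
    obtain ⟨d, h3, h4⟩ := hv
    refine ⟨act n u d * c, ?_, ?_⟩
    · rw [act_mul, h3, map_mul, map_mul, map_inv, h1]; group
    · rw [_root_.map_mul, PP_UU hr hu', Ps_mul, h2, h4]
  | inv u hu' hu =>
    obtain ⟨c, h1, h2⟩ := hu
    refine ⟨(act n u⁻¹ c)⁻¹, ?_, ?_⟩
    · have := congrArg (act n u⁻¹) h1
      rw [act_inv_self, map_mul, map_mul, map_inv (act n u⁻¹) c] at this
      conv_rhs => rw [this]
      generalize act n u⁻¹ (x r) = e
      group
    · rw [_root_.map_inv, PP_UU hr (inv_mem hu'), Ps_inv, h2]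

theorem PP_comm (r : ℕ) : ∀ (k : ℕ) (c : F), FreeGroup.norm c ≤ k → c * x r = x r * c → PP r c = 1 := by
  intro k
  induction k with
  | zero =>
    intro c hc _
    have : c = 1 := by rw [← FreeGroup.norm_eq_zero]; omega
    rw [this, _root_.map_one]
  | succ k ih =>
    intro c hc h
    by_cases h1 : hd c = 2*r+1
    · obtain ⟨c', rfl, _, h3⟩ := dex h1
      rw [_root_.map_mul, PP_r, one_mul]
      refine ih c' (by omega) ?_
      rw [mul_assoc] at h
      exact mul_left_cancel h
    by_cases h2 : hd c = 2*r+2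
    · obtain ⟨c', rfl, _, h3⟩ := dexi h2
      rw [_root_.map_mul, _root_.map_inv, PP_r, inv_one, one_mul]
      refine ih c' (by omega) ?_
      rw [mul_inv_cancel_left, mul_assoc, inv_mul_eq_iff_eq_mul] at h
      exact h
    by_cases h0 : c = 1
    · rw [h0, _root_.map_one]
    exfalso
    have a1 := hdx r c h2
    rw [← h] at a1
    by_cases h4 : hd c⁻¹ = 2*r+1
    · have a2 := (hdxi_c h4).2
      have e : (x r)⁻¹ * c⁻¹ = (c * x r)⁻¹ := by group
      rw [e, FreeGroup.norm_inv_eq, FreeGroup.norm_inv_eq] at a2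
      omega
    · have := (red_mul c (x r) (by left; rw [hd_x]; exact h4)).2 h0
      omega

theorem TT_x {n r : ℕ} (hr : 1 ≤ r) (m : ℕ) (hm : r + (m + 1) ≤ n) :
    act n (TT n r (m+1)) (x r) = x r * x (r+1) * (x r)⁻¹ := by
  induction m with
  | zero =>
    rw [TT, TT, one_mul, Nat.add_zero, act_gen hr (by omega), ph_A]
  | succ m ih =>
    rw [TT, act_mul, act_gen (by omega) (by omega), ph_o _ _ (by omega) (by omega), ih (by omega)]

/-- The stabilizer of `x r` in `H n r` is `H n (r+1)`. -/
theorem stab {n r : ℕ} (hr : 1 ≤ r) (hrn : r ≤ n) {g : Braid n} (hg : g ∈ H n r)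
    (hx : act n g (x r) = x r) : g ∈ H n (r+1) := by
  obtain ⟨u, hu, h, hh, m, hm, rfl⟩ := decomp_H hr hrn hg
  cases m with
  | zero =>
    rw [TT, mul_one] at hx ⊢
    rw [act_mul, fix_low hh (by omega)] at hx
    obtain ⟨c, h1, h2⟩ := UU_c hr hu
    rw [h1, mul_inv_eq_iff_eq_mul] at hx
    rw [PP_comm r _ c le_rfl hx, Ps_one] at h2
    rw [← h2, one_mul]
    exact hh
  | succ m =>
    exfalso
    have := congrArg (PP r) hx
    rw [act_mul, act_mul, PP_UU hr hu, PP_H hh, TT_x hr m hm, PP_r, map_mul (PP r),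
      map_mul (PP r), map_inv (PP r), PP_r, PP_o (by omega)] at this
    simp only [one_mul, inv_one, mul_one] at this
    have h3 := (MulEquiv.map_eq_one_iff (act n h)).1 this
    have h4 := hd_x (r+1)
    rw [h3, hd_one] at h4
    omega

/-- `y` is the conjugate of `x k` by the shortest possible `w`. -/
def CG (y w : F) (k : ℕ) : Prop := y = w * x k * w⁻¹ ∧ hd w⁻¹ ≠ 2*k+1 ∧ hd w⁻¹ ≠ 2*k+2

theorem CG_exists (k : ℕ) : ∀ (m : ℕ) (w : F), FreeGroup.norm w ≤ m →
    ∃ w', CG (w * x k * w⁻¹) w' k := by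
  intro m
  induction m with
  | zero =>
    intro w hw
    have : w = 1 := by rw [← FreeGroup.norm_eq_zero]; omega
    subst this
    exact ⟨1, rfl, by simp [hd_one], by simp [hd_one]⟩
  | succ m ih =>
    intro w hw
    have hn := FreeGroup.norm_inv_eq (x := w)
    by_cases h1 : hd w⁻¹ = 2*k+1
    · obtain ⟨c, hc, _, h3⟩ := dex h1
      obtain ⟨w', hw'⟩ := ih c⁻¹ (by rw [FreeGroup.norm_inv_eq]; omega)
      have e : w = c⁻¹ * (x k)⁻¹ := by rw [← inv_inv w, hc]; group
      refine ⟨w', ?_⟩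
      convert hw' using 1
      rw [e]; group
    by_cases h2 : hd w⁻¹ = 2*k+2
    · obtain ⟨c, hc, _, h3⟩ := dexi h2
      obtain ⟨w', hw'⟩ := ih c⁻¹ (by rw [FreeGroup.norm_inv_eq]; omega)
      have e : w = c⁻¹ * x k := by rw [← inv_inv w, hc]; group
      refine ⟨w', ?_⟩
      convert hw' using 1
      rw [e]; group
    exact ⟨w, rfl, h1, h2⟩

theorem conj_act {n r : ℕ} {g : Braid n} (hg : g ∈ H n r) :
    ∀ j, ∃ w k, act n g (x j) = w * x k * w⁻¹ := by
  refine H_ind (P := fun g => ∀ j, ∃ w k, act n g (x j) = w * x k * w⁻¹) ?_ ?_ ?_ hg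
  · intro j
    exact ⟨1, j, by rw [_root_.map_one]; simp⟩
  · intro g i _ h0 h1 h2 ih j
    rw [act_mg g h1 h2]
    by_cases j1 : j = i
    · subst j1
      obtain ⟨w, k, h⟩ := ih (j+1)
      refine ⟨act n g (x j) * w, k, ?_⟩
      rw [ph_A, map_mul, map_mul, map_inv, h]; group
    by_cases j2 : j = i + 1
    · subst j2
      rw [ph_B]; exact ih i
    rw [ph_o _ _ j1 j2]
    exact ih j
  · intro g i _ h0 h1 h2 ih j
    rw [act_mgi g h1 h2]
    by_cases j1 : j = i
    · subst j1
      rw [phi_A]; exact ih (j+1)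
    by_cases j2 : j = i + 1
    · subst j2
      obtain ⟨w, k, h⟩ := ih i
      refine ⟨(act n g (x (i+1)))⁻¹ * w, k, ?_⟩
      rw [phi_B, map_mul, map_mul, map_inv, h]; group
    rw [phi_o _ _ j1 j2]
    exact ih j

theorem CG_act {n r : ℕ} {g : Braid n} (hg : g ∈ H n r) (j : ℕ) :
    ∃ w k, CG (act n g (x j)) w k := by
  obtain ⟨w, k, h⟩ := conj_act hg j
  obtain ⟨w', h'⟩ := CG_exists k _ w le_rfl
  exact ⟨w', k, by rw [h]; exact h'⟩

theorem norm_conj_le (w : F) (k : ℕ) : FreeGroup.norm (w * x k * w⁻¹) ≤ 2 * FreeGroup.norm w + 1 := by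
  have h1 := FreeGroup.norm_mul_le (w * x k) w⁻¹
  have h2 := FreeGroup.norm_mul_le w (x k)
  rw [FreeGroup.norm_inv_eq] at h1
  rw [FreeGroup.norm_of] at h2
  omega

theorem CG.norm_wx {y w : F} {k : ℕ} (h : CG y w k) :
    FreeGroup.norm (w * x k) = FreeGroup.norm w + 1 ∧ hd (w * x k)⁻¹ = 2*k+2 := by
  constructor
  · rw [(red_mul w (x k) (by left; rw [hd_x]; exact h.2.1)).1, FreeGroup.norm_of]
  · rw [mul_inv_rev]
    exact (hdxi k _ h.2.1).1

theorem CG.norm_y {y w : F} {k : ℕ} (h : CG y w k) : FreeGroup.norm y = 2 * FreeGroup.norm w + 1 := by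
  have a := h.norm_wx
  rw [h.1, (red_mul (w * x k) w⁻¹ (by left; rw [a.2]; exact h.2.2.symm)).1, a.1,
    FreeGroup.norm_inv_eq]
  omega

theorem CG.hd_y {y w : F} {k : ℕ} (h : CG y w k) (hw : w ≠ 1) : hd y = hd w := by
  have a := hdx k w⁻¹ h.2.2
  rw [h.1, mul_assoc]
  exact (red_mul w (x k * w⁻¹) (by left; rw [a.1]; exact h.2.1)).2 hw

theorem red1 {y w y' w' : F} {k k' : ℕ} (h : CG y w k) (h' : CG y' w' k')
    (hv : hd (w⁻¹ * w') = 2*k+2) :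
    FreeGroup.norm w + 1 ≤ FreeGroup.norm w' ∧
      FreeGroup.norm (y * y' * y⁻¹) < FreeGroup.norm y' := by
  have a := (red_mul w (w⁻¹ * w') (by left; rw [hv]; exact h.2.2)).1
  rw [mul_inv_cancel_left] at a
  have b := (hdx_c hv).2
  refine ⟨by omega, ?_⟩
  have e : y * y' * y⁻¹ = (w * (x k * (w⁻¹ * w'))) * x k' * (w * (x k * (w⁻¹ * w')))⁻¹ := by
    rw [h.1, h'.1]; group
  have c := norm_conj_le (w * (x k * (w⁻¹ * w'))) k'
  have d := FreeGroup.norm_mul_le w (x k * (w⁻¹ * w'))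
  rw [e, h'.norm_y]
  omega

theorem red2 {y w y' w' : F} {k k' : ℕ} (h : CG y w k) (h' : CG y' w' k')
    (hv : hd (w'⁻¹ * w) = 2*k'+1) :
    FreeGroup.norm w' + 1 ≤ FreeGroup.norm w ∧ (w' ≠ 1 → hd w = hd w') ∧
      FreeGroup.norm (y'⁻¹ * y * y') < FreeGroup.norm y := by
  have a := red_mul w' (w'⁻¹ * w) (by left; rw [hv]; exact h'.2.1)
  rw [mul_inv_cancel_left] at a
  have b := (hdxi_c hv).2
  refine ⟨by omega, a.2, ?_⟩
  have e : y'⁻¹ * y * y' = (w' * ((x k')⁻¹ * (w'⁻¹ * w))) * x k *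
      (w' * ((x k')⁻¹ * (w'⁻¹ * w)))⁻¹ := by
    rw [h.1, h'.1]; group
  have c := norm_conj_le (w' * ((x k')⁻¹ * (w'⁻¹ * w))) k
  have d := FreeGroup.norm_mul_le w' ((x k')⁻¹ * (w'⁻¹ * w))
  rw [e, h.norm_y]
  omega

/-- The product `y j * y (j+1) * ... * y (j+m)`. -/
def PR (y : ℕ → F) : ℕ → ℕ → F
  | j, 0 => y j
  | j, m + 1 => y j * PR y (j+1) m

theorem PR_map (f : F →* F) (y : ℕ → F) : ∀ m j, f (PR y j m) = PR (fun i => f (y i)) j m := by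
  intro m
  induction m with
  | zero => intro j; rfl
  | succ m ih => intro j; rw [PR, PR, _root_.map_mul, ih]

theorem PR_x (m : ℕ) : ∀ j, FreeGroup.norm (PR x j m) = m + 1 ∧ hd (PR x j m) = 2*j+1 := by
  induction m with
  | zero => intro j; exact ⟨by rw [PR, FreeGroup.norm_of], by rw [PR, hd_x]⟩
  | succ m ih =>
    intro j
    have := ih (j+1)
    have h := hdx j (PR x (j+1) m) (by omega)
    rw [PR]
    exact ⟨by omega, h.1⟩

theorem ph_PR_high (j : ℕ) : ∀ m a, j + 1 < a → ph j (PR x a m) = PR x a m := by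
  intro m
  induction m with
  | zero => intro a h; rw [PR, ph_o j a (by omega) (by omega)]
  | succ m ih => intro a h; rw [PR, map_mul, ph_o j a (by omega) (by omega), ih (a+1) (by omega)]

theorem ph_PR (j : ℕ) : ∀ m a, a ≤ j → j + 1 ≤ a + m → ph j (PR x a m) = PR x a m := by
  intro m
  induction m with
  | zero => intro a h1 h2; omega
  | succ m ih =>
    intro a h1 h2
    by_cases h : a = j
    · subst h
      cases m with
      | zero =>
        rw [PR, PR, map_mul, ph_A, ph_B]; group
      | succ m =>
        rw [PR, PR, map_mul, map_mul, ph_A, ph_B, ph_PR_high a m (a+1+1) (by omega)]; group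
    · rw [PR, map_mul, ph_o j a (by omega) (by omega), ih (a+1) (by omega) (by omega)]

theorem act_PR {n r : ℕ} (hrn : r ≤ n) {g : Braid n} (hg : g ∈ H n r) :
    act n g (PR x r (n-r)) = PR x r (n-r) := by
  refine H_ind (P := fun g => act n g (PR x r (n-r)) = PR x r (n-r)) ?_ ?_ ?_ hg
  · rw [_root_.map_one]; rfl
  · intro g j _ h0 h1 h2 ih
    rw [act_mg g h1 h2, ph_PR j (n-r) r h0 (by omega), ih]
  · intro g j _ h0 h1 h2 ih
    have : (ph j)⁻¹ (PR x r (n-r)) = PR x r (n-r) := by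
      conv_lhs => rw [← ph_PR j (n-r) r h0 (by omega)]
      rw [MulAut.inv_apply_self]
    rw [act_mgi g h1 h2, this, ih]

/-- Without reductions the product is long. -/
theorem long_aux (y w : ℕ → F) (k : ℕ → ℕ) (hc : ∀ i, CG (y i) (w i) (k i)) : ∀ m j,
    (∀ i, j ≤ i → i < j + m → hd ((w i)⁻¹ * w (i+1)) ≠ 2 * k i + 2 ∧
      hd ((w (i+1))⁻¹ * w i) ≠ 2 * k (i+1) + 1) →
    hd ((w j * x (k j))⁻¹ * PR y j m) ≠ 2 * k j + 2 ∧
      FreeGroup.norm (w j) + m ≤ FreeGroup.norm ((w j * x (k j))⁻¹ * PR y j m) := by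
  intro m
  induction m with
  | zero =>
    intro j _
    have e : (w j * x (k j))⁻¹ * PR y j 0 = (w j)⁻¹ := by
      rw [PR, (hc j).1]; group
    rw [e, FreeGroup.norm_inv_eq]
    exact ⟨(hc j).2.2, by omega⟩
  | succ m ih =>
    intro j hj
    obtain ⟨i1, i2⟩ := ih (j+1) (fun i h1 h2 => hj i (by omega) (by omega))
    obtain ⟨j1, j2⟩ := hj j (by omega) (by omega)
    generalize hQ : (w (j+1) * x (k (j+1)))⁻¹ * PR y (j+1) m = Q at i1 i2
    have e : (w j * x (k j))⁻¹ * PR y j (m+1) = ((w j)⁻¹ * w (j+1)) * (x (k (j+1)) * Q) := by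
      rw [← hQ, PR, (hc j).1]; group
    rw [e]
    have a := hdx (k (j+1)) Q i1
    have e2 : ((w j)⁻¹ * w (j+1))⁻¹ = (w (j+1))⁻¹ * w j := by group
    have b := red_mul ((w j)⁻¹ * w (j+1)) (x (k (j+1)) * Q) (by left; rw [e2, a.1]; exact j2)
    have c := FreeGroup.norm_mul_le (w (j+1)) ((w (j+1))⁻¹ * w j)
    rw [mul_inv_cancel_left, ← e2, FreeGroup.norm_inv_eq] at c
    constructor
    · by_cases v1 : (w j)⁻¹ * w (j+1) = 1
      · rw [v1, one_mul]; omega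
      · rw [b.2 v1]; exact j1
    · omega

theorem long (y w : ℕ → F) (k : ℕ → ℕ) (hc : ∀ i, CG (y i) (w i) (k i)) (m j : ℕ)
    (h : ∀ i, j ≤ i → i < j + m → hd ((w i)⁻¹ * w (i+1)) ≠ 2 * k i + 2 ∧
      hd ((w (i+1))⁻¹ * w i) ≠ 2 * k (i+1) + 1) :
    2 * FreeGroup.norm (w j) + 1 + m ≤ FreeGroup.norm (PR y j m) := by
  obtain ⟨a1, a2⟩ := long_aux y w k hc m j h
  have b := (hc j).norm_wx
  have c := (red_mul (w j * x (k j)) ((w j * x (k j))⁻¹ * PR y j m)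
    (by left; rw [b.2]; exact a1.symm)).1
  rw [mul_inv_cancel_left] at c
  omega

theorem sum_lt {f g : ℕ → ℕ} {n j : ℕ} (hj : j + 1 ≤ n) (h : ∀ i, i ≠ j → i ≠ j + 1 → f i = g i)
    (hlt : f j + f (j+1) < g j + g (j+1)) :
    ∑ i ∈ Finset.range (n+1), f i < ∑ i ∈ Finset.range (n+1), g i := by
  have hs : ∀ f : ℕ → ℕ, ∑ i ∈ Finset.range (n+1), f i =
      f j + (f (j+1) + ∑ i ∈ ((Finset.range (n+1)).erase j).erase (j+1), f i) := by
    intro f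
    rw [Finset.add_sum_erase _ _ (by simp; omega), Finset.add_sum_erase _ _ (by simp; omega)]
  rw [hs f, hs g]
  have : ∑ i ∈ ((Finset.range (n+1)).erase j).erase (j+1), f i =
      ∑ i ∈ ((Finset.range (n+1)).erase j).erase (j+1), g i := by
    apply Finset.sum_congr rfl
    intro i hi
    simp only [Finset.mem_erase] at hi
    exact h i hi.2.1 hi.1
  omega

theorem evalWord_append (n : ℕ) (v w : List (ℕ × Bool)) :
    evalWord n (v ++ w) = evalWord n v * evalWord n w := by
  simp [evalWord]

theorem SP_gen {n r j : ℕ} {g : Braid n} (hr : 1 ≤ r) (h : SigmaPositive n r g) (h1 : r ≤ j)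
    (h2 : j ≤ n - 1) : SigmaPositive n r (g * genσ n j) := by
  obtain ⟨w, a1, a2, a3, a4, a5⟩ := h
  refine ⟨w ++ [(j, true)], ?_, ?_, ?_, ?_, ?_⟩
  · intro p hp
    rcases List.mem_append.1 hp with hp | hp
    · exact a1 p hp
    · simp at hp; subst hp; exact ⟨by simp; omega, h2⟩
  · simp [a2]
  · simp [a3]
  · intro p hp
    rcases List.mem_append.1 hp with hp | hp
    · exact a4 p hp
    · simp at hp; subst hp; exact h1
  · rw [evalWord_append, a5]; simp [evalWord]

theorem SP_geni {n r j : ℕ} {g : Braid n} (hr : 1 ≤ r) (h : SigmaPositive n r g) (h1 : r + 1 ≤ j)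
    (h2 : j ≤ n - 1) : SigmaPositive n r (g * (genσ n j)⁻¹) := by
  obtain ⟨w, a1, a2, a3, a4, a5⟩ := h
  refine ⟨w ++ [(j, false)], ?_, ?_, ?_, ?_, ?_⟩
  · intro p hp
    rcases List.mem_append.1 hp with hp | hp
    · exact a1 p hp
    · simp at hp; subst hp; exact ⟨by simp; omega, h2⟩
  · simp [a2]
  · simp [a3]; omega
  · intro p hp
    rcases List.mem_append.1 hp with hp | hp
    · exact a4 p hp
    · simp at hp; subst hp; simp; omega
  · rw [evalWord_append, a5]; simp [evalWord]

theorem SP_H {n r : ℕ} {h : Braid n} (hr : 1 ≤ r) (hrn : r ≤ n - 1) (hh : h ∈ H n (r+1)) :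
    SigmaPositive n r (h * genσ n r) := by
  have : ∃ w : List (ℕ × Bool), (∀ p ∈ w, r + 1 ≤ p.1 ∧ p.1 ≤ n - 1) ∧ evalWord n w = h := by
    refine H_ind (P := fun h => ∃ w : List (ℕ × Bool), (∀ p ∈ w, r + 1 ≤ p.1 ∧ p.1 ≤ n - 1) ∧
      evalWord n w = h) ?_ ?_ ?_ hh
    · exact ⟨[], by simp, by simp [evalWord]⟩
    · rintro g j _ h0 h1 h2 ⟨w, a1, rfl⟩
      refine ⟨w ++ [(j, true)], ?_, by rw [evalWord_append]; simp [evalWord]⟩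
      intro p hp
      rcases List.mem_append.1 hp with hp | hp
      · exact a1 p hp
      · simp at hp; subst hp; exact ⟨h0, h2⟩
    · rintro g j _ h0 h1 h2 ⟨w, a1, rfl⟩
      refine ⟨w ++ [(j, false)], ?_, by rw [evalWord_append]; simp [evalWord]⟩
      intro p hp
      rcases List.mem_append.1 hp with hp | hp
      · exact a1 p hp
      · simp at hp; subst hp; exact ⟨h0, h2⟩
  obtain ⟨w, a1, rfl⟩ := this
  refine ⟨w ++ [(r, true)], ?_, by simp, ?_, ?_, by rw [evalWord_append]; simp [evalWord]⟩
  · intro p hp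
    rcases List.mem_append.1 hp with hp | hp
    · have := a1 p hp; omega
    · simp at hp; subst hp; exact ⟨hr, hrn⟩
  · intro hp
    rcases List.mem_append.1 hp with hp | hp
    · have := a1 _ hp; simp at this
    · simp at hp
  · intro p hp
    rcases List.mem_append.1 hp with hp | hp
    · have := a1 p hp; omega
    · simp at hp; subst hp; exact le_rfl

/-- Existence of a positive word. -/
theorem main_red {n r : ℕ} (hr : 1 ≤ r) (hrn : r ≤ n - 1) : ∀ (N : ℕ) (g : Braid n), g ∈ H n r →
    ∑ i ∈ Finset.range (n+1), FreeGroup.norm (act n g (x i)) < N →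
    hd (act n g (x r)) = 2*r+1 → act n g (x r) ≠ x r → SigmaPositive n r g := by
  intro N
  induction N with
  | zero => intro g _ h; omega
  | succ N ih =>
    intro g hg hN hhd hne
    choose w k hc using CG_act hg
    -- reductions with larger index
    by_cases hA : ∃ j, r + 1 ≤ j ∧ j ≤ n - 1 ∧ hd ((w j)⁻¹ * w (j+1)) = 2 * k j + 2
    · obtain ⟨j, h1, h2, h3⟩ := hA
      have R := (red1 (hc j) (hc (j+1)) h3).2
      have hj1 : 1 ≤ j := by omega
      have e : act n (g * genσ n j) (x r) = act n g (x r) := by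
        rw [act_mg g hj1 h2, ph_o j r (by omega) (by omega)]
      have := ih (g * genσ n j) (mul_mem hg (gen_mem (by omega) hj1 h2)) (by
        refine lt_of_lt_of_le (sum_lt (j := j) (g := fun i => FreeGroup.norm (act n g (x i)))
          (by omega) ?_ ?_) (by omega)
        · intro i i1 i2
          simp only [act_mg g hj1 h2]
          rw [ph_o j i i1 i2]
        · simp only [act_mg g hj1 h2]
          rw [ph_A, ph_B, map_mul, map_mul, map_inv]
          omega) (by rw [e]; exact hhd) (by rw [e]; exact hne)
      have := SP_geni hr this h1 h2
      rwa [mul_inv_cancel_right] at this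
    by_cases hB : ∃ j, r + 1 ≤ j ∧ j ≤ n - 1 ∧ hd ((w (j+1))⁻¹ * w j) = 2 * k (j+1) + 1
    · obtain ⟨j, h1, h2, h3⟩ := hB
      have R := (red2 (hc j) (hc (j+1)) h3).2.2
      have hj1 : 1 ≤ j := by omega
      have e : act n (g * (genσ n j)⁻¹) (x r) = act n g (x r) := by
        rw [act_mgi g hj1 h2, phi_o j r (by omega) (by omega)]
      have := ih (g * (genσ n j)⁻¹) (mul_mem hg (inv_mem (gen_mem (by omega) hj1 h2))) (by
        refine lt_of_lt_of_le (sum_lt (j := j) (g := fun i => FreeGroup.norm (act n g (x i)))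
          (by omega) ?_ ?_) (by omega)
        · intro i i1 i2
          simp only [act_mgi g hj1 h2]
          rw [phi_o j i i1 i2]
        · simp only [act_mgi g hj1 h2]
          rw [phi_A, phi_B, map_mul, map_mul, map_inv]
          omega) (by rw [e]; exact hhd) (by rw [e]; exact hne)
      have := SP_gen hr this (by omega) h2
      rwa [inv_mul_cancel_right] at this
    have hno : ∀ i, r + 1 ≤ i → i ≤ n - 1 → hd ((w i)⁻¹ * w (i+1)) ≠ 2 * k i + 2 ∧
        hd ((w (i+1))⁻¹ * w i) ≠ 2 * k (i+1) + 1 := by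
      intro i h1 h2
      exact ⟨fun h => hA ⟨i, h1, h2, h⟩, fun h => hB ⟨i, h1, h2, h⟩⟩
    have hD : PR (fun i => act n g (x i)) r (n-r) = PR x r (n-r) := by
      have := act_PR (by omega) hg
      rw [← this]
      exact (PR_map (act n g : F ≃* F).toMonoidHom x (n-r) r).symm
    have hDn := PR_x (n-r) r
    obtain ⟨m, hm⟩ : ∃ m, n - r = m + 1 := ⟨n - r - 1, by omega⟩
    by_cases c1 : hd ((w r)⁻¹ * w (r+1)) = 2 * k r + 2
    · exfalso
      have R := (red1 (hc r) (hc (r+1)) c1).1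
      have L := long (fun i => act n g (x i)) w k hc m (r+1) (fun i h1 h2 => hno i h1 (by omega))
      have ny := (hc r).norm_y
      obtain ⟨y', e1, _, e3⟩ := dex hhd
      obtain ⟨d', f1, _, f3⟩ := dex hDn.2
      rw [hm, PR, e1] at hD
      rw [hm] at f1 f3 hDn
      have e : PR (fun i => act n g (x i)) (r+1) m = y'⁻¹ * d' := by
        rw [f1, mul_assoc] at hD
        have := mul_left_cancel hD
        rw [← this]; group
      have q := FreeGroup.norm_mul_le y'⁻¹ d'
      rw [← e, FreeGroup.norm_inv_eq] at q
      omega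
    by_cases c2 : hd ((w (r+1))⁻¹ * w r) = 2 * k (r+1) + 1
    · obtain ⟨R1, R2, R⟩ := red2 (hc r) (hc (r+1)) c2
      have w1 : w r ≠ 1 := by
        intro h
        rw [h, FreeGroup.norm_one] at R1
        omega
      have hw := (hc r).hd_y w1
      have gm : g * (genσ n r)⁻¹ ∈ H n r := mul_mem hg (inv_mem (gen_mem le_rfl hr hrn))
      have e : act n (g * (genσ n r)⁻¹) (x r) = act n g (x (r+1)) := by
        rw [act_mgi g hr hrn, phi_A]
      have hh : hd (act n g (x (r+1))) = 2*r+1 := by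
        by_cases w2 : w (r+1) = 1
        · rw [w2, inv_one, one_mul] at c2
          have : k (r+1) = r := by omega
          rw [(hc (r+1)).1, w2, this]
          simp [hd_x]
        · rw [(hc (r+1)).hd_y w2, ← R2 w2, ← hw, hhd]
      by_cases hf : act n g (x (r+1)) = x r
      · have := SP_H hr hrn (stab hr (by omega) gm (by rw [e, hf]))
        rwa [inv_mul_cancel_right] at this
      have := ih (g * (genσ n r)⁻¹) gm (by
        refine lt_of_lt_of_le (sum_lt (j := r) (g := fun i => FreeGroup.norm (act n g (x i)))
          (by omega) ?_ ?_) (by omega)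
        · intro i i1 i2
          simp only [act_mgi g hr hrn]
          rw [phi_o r i i1 i2]
        · simp only [act_mgi g hr hrn]
          rw [phi_A, phi_B, map_mul, map_mul, map_inv]
          omega) (by rw [e]; exact hh) (by rw [e]; exact hf)
      have := SP_gen hr this le_rfl hrn
      rwa [inv_mul_cancel_right] at this
    exfalso
    have L := long (fun i => act n g (x i)) w k hc (n-r) r (fun i h1 h2 => by
      by_cases hi : i = r
      · subst hi; exact ⟨c1, c2⟩
      · exact hno i (by omega) (by omega))
    rw [hD] at L
    have w1 : w r = 1 := by rw [← FreeGroup.norm_eq_zero]; omega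
    have y1 := (hc r).1
    rw [w1, one_mul, inv_one, mul_one] at y1
    rw [y1, hd_x] at hhd
    have : k r = r := by omega
    rw [this] at y1
    exact hne y1

theorem pos_aux {n : ℕ} (g : Braid n) {i : ℕ} (h1 : 1 ≤ i) (h2 : i ≤ n - 1) : ∀ (m r : ℕ),
    n ≤ r + m → 1 ≤ r → g * genσ n i * g⁻¹ ∈ H n r →
    ∃ r, 1 ≤ r ∧ r ≤ n - 1 ∧ SigmaPositive n r (g * genσ n i * g⁻¹) := by
  intro m
  induction m with
  | zero =>
    intro r hr _ hH
    rw [H_bot (by omega), Subgroup.mem_bot] at hH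
    exact absurd hH (conj_ne_one g h1 h2)
  | succ m ih =>
    intro r hr hr1 hH
    by_cases hrn : r ≤ n - 1
    · by_cases hf : act n (g * genσ n i * g⁻¹) (x r) = x r
      · exact ih (r+1) (by omega) (by omega) (stab hr1 (by omega) hH hf)
      · exact ⟨r, hr1, hrn, main_red hr1 hrn _ _ hH (Nat.lt_succ_self _) (conj_start g h1 h2 hH) hf⟩
    · rw [H_bot (by omega), Subgroup.mem_bot] at hH
      exact absurd hH (conj_ne_one g h1 h2)

theorem conj_pos {n : ℕ} (g : Braid n) {i : ℕ} (h1 : 1 ≤ i) (h2 : i ≤ n - 1) :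
    ∃ r, 1 ≤ r ∧ r ≤ n - 1 ∧ SigmaPositive n r (g * genσ n i * g⁻¹) :=
  pos_aux g h1 h2 n 1 (by omega) le_rfl (by rw [H_top]; trivial)

end PropS

/-- Theorem (Property S for the Dehornoy ordering with respect to band generators):
for all `α, β ∈ B_n` and `1 ≤ i < j ≤ n`, `αβ <_D α a_{i,j} β` and `α a_{i,j}⁻¹ β <_D αβ`. -/
theorem dehornoy_property_S (n : ℕ) (hn : 2 ≤ n) (α β : Braid n)
    (i j : ℕ) (h1 : 1 ≤ i) (hij : i < j) (hjn : j ≤ n) :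
    dehornoyLt n (α * β) (α * band n i j * β) ∧
    dehornoyLt n (α * (band n i j)⁻¹ * β) (α * β) := by
  unfold band
  generalize ((List.range' (i+1) (j-1-i)).reverse.map (genσ n)).prod = c
  obtain ⟨r, a1, a2, a3⟩ := PropS.conj_pos (n := n) (β⁻¹ * c) h1 (by omega)
  refine ⟨⟨r, a1, a2, ?_⟩, ⟨r, a1, a2, ?_⟩⟩
  · convert a3 using 1
    group
  · convert a3 using 1
    group
end
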